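/- arXiv:1607.00921 — 4 statements merged into one kernel-verified Lean document; each statement's English description precedes it below -/
import Mathlib

section
/- Let R be a ring which is a finitely generated module over a central subring C, and let p be a prime ideal of C. Then there exists a prime ideal Q of R with Q ∩ C = p and height(Q) ≥ height(p). -/
/-- A two-sided ideal of a (possibly noncommutative) ring is prime. -/
def IsPrimeTS {R : Type*} [Ring R] (P : TwoSidedIdeal R) : Prop :=
  P ≠ ⊤ ∧ ∀ a b : R, (∀ r : R, a * r * b ∈ P) → a ∈ P ∨ b ∈ P

/-- Height of an element `P` in a poset with respect to a predicate (`prime`):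
the supremum of lengths of strictly increasing chains of elements satisfying the
predicate and ending at `P`. -/
noncomputable def primeChainHeight {α : Type*} [Preorder α] (isP : α → Prop) (P : α) : ℕ∞ :=
  sSup {n : ℕ∞ | ∃ m : ℕ, n = (m : ℕ∞) ∧ ∃ f : Fin (m + 1) → α,
    StrictMono f ∧ (∀ i, isP (f i)) ∧ f (Fin.last m) = P}

/-- Height (codimension) of a two-sided ideal: the supremum of lengths of chains of
prime two-sided ideals descending from it. -/
noncomputable def tsHeight {R : Type*} [Ring R] (P : TwoSidedIdeal R) : ℕ∞ :=
  primeChainHeight IsPrimeTS P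

/-- Height of an ideal of a commutative ring. -/
noncomputable def cHeight {C : Type*} [CommRing C] (p : Ideal C) : ℕ∞ :=
  primeChainHeight Ideal.IsPrime p

/-- Contraction `P ∩ C` of a two-sided ideal of `R` to the central subring `C`
(given via the algebra structure map, whose image is central). -/
def contractTS {C R : Type*} [CommRing C] [Ring R] [Algebra C R]
    (P : TwoSidedIdeal R) : Ideal C :=
  Ideal.comap (algebraMap C R) (TwoSidedIdeal.asIdeal P)

lemma mem_contractTS {C R : Type*} [CommRing C] [Ring R] [Algebra C R]
    (P : TwoSidedIdeal R) (c : C) : c ∈ contractTS (C := C) P ↔ algebraMap C R c ∈ P := by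
  simp [contractTS, Ideal.mem_comap, TwoSidedIdeal.mem_asIdeal]

/-- maximal among the ideals whose contraction is inside `p` -/
def PMax {C R : Type*} [CommRing C] [Ring R] [Algebra C R] (p : Ideal C)
    (Q : TwoSidedIdeal R) : Prop :=
  Maximal (fun J : TwoSidedIdeal R => contractTS (C := C) J ≤ p) Q

lemma exists_pmax {C R : Type*} [CommRing C] [Ring R] [Algebra C R] (p : Ideal C)
    (I : TwoSidedIdeal R) (hI : contractTS (C := C) I ≤ p) :
    ∃ Q : TwoSidedIdeal R, I ≤ Q ∧ PMax p Q := by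
  refine zorn_le_nonempty₀ {J : TwoSidedIdeal R | contractTS (C := C) J ≤ p} ?_ I hI
  intro c hc hchain y hy
  refine ⟨TwoSidedIdeal.mk' {x | ∃ J ∈ c, x ∈ J} ⟨y, hy, y.zero_mem⟩ ?_ ?_ ?_ ?_, ?_, ?_⟩
  · rintro a b ⟨J, hJ, ha⟩ ⟨K, hK, hb⟩
    rcases hchain.total hJ hK with h | h
    · exact ⟨K, hK, K.add_mem (h ha) hb⟩
    · exact ⟨J, hJ, J.add_mem ha (h hb)⟩
  · rintro a ⟨J, hJ, ha⟩
    exact ⟨J, hJ, J.neg_mem ha⟩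
  · rintro a b ⟨J, hJ, ha⟩
    exact ⟨J, hJ, J.mul_mem_left _ _ ha⟩
  · rintro a b ⟨J, hJ, ha⟩
    exact ⟨J, hJ, J.mul_mem_right _ _ ha⟩
  · intro x hx
    rw [mem_contractTS, TwoSidedIdeal.mem_mk'] at hx
    obtain ⟨J, hJ, hx⟩ := hx
    exact hc hJ ((mem_contractTS _ _).2 hx)
  · intro J hJ x hx
    exact (TwoSidedIdeal.mem_mk' _ _ _ _ _ _ _).2 ⟨J, hJ, hx⟩

lemma PMax.isPrime {C R : Type*} [CommRing C] [Ring R] [Algebra C R] {p : Ideal C}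
    (hp : p.IsPrime) {Q : TwoSidedIdeal R} (hQ : PMax p Q) : IsPrimeTS Q := by
  have key : ∀ J : TwoSidedIdeal R, Q ≤ J → ∀ b ∈ J, b ∉ Q →
      ∃ s : C, s ∉ p ∧ algebraMap C R s ∈ J := by
    intro J hJ b hb hbQ
    by_contra! h
    have : contractTS (C := C) J ≤ p := by
      intro c hc
      by_contra hcp
      exact h c hcp ((mem_contractTS _ _).1 hc)
    exact hbQ (hQ.2 this hJ hb)
  constructor
  · rintro rfl
    exact hp.ne_top (top_le_iff.1 (fun c _ => hQ.1 ((mem_contractTS _ _).2 (TwoSidedIdeal.mem_top R))))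
  · intro a b hab
    by_contra! hcon
    obtain ⟨ha, hb⟩ := hcon
    obtain ⟨s, hs, hsA⟩ := key (TwoSidedIdeal.mk' {x | ∀ r, x * r * b ∈ Q}
      (by intro r; simpa using Q.zero_mem)
      (by intro x y hx hy r; rw [add_mul, add_mul]; exact Q.add_mem (hx r) (hy r))
      (by intro x hx r; rw [neg_mul, neg_mul]; exact Q.neg_mem (hx r))
      (by intro x y hy r; rw [mul_assoc x, mul_assoc x]; exact Q.mul_mem_left _ _ (hy r))
      (by intro x y hx r; rw [mul_assoc x y]; exact hx _))
      (by
        intro x hx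
        exact (TwoSidedIdeal.mem_mk' _ _ _ _ _ _ _).2
          fun r => Q.mul_mem_right _ _ (Q.mul_mem_right _ _ hx)) a
      ((TwoSidedIdeal.mem_mk' _ _ _ _ _ _ _).2 hab) ha
    have hsb := (TwoSidedIdeal.mem_mk' _ _ _ _ _ _ _).1 hsA 1
    rw [mul_one] at hsb
    obtain ⟨t, ht, htB⟩ := key (TwoSidedIdeal.mk' {x | algebraMap C R s * x ∈ Q}
      (by simpa using Q.zero_mem)
      (by intro x y hx hy; simp only [Set.mem_setOf_eq, mul_add] at *; exact Q.add_mem hx hy)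
      (by intro x hx; simp only [Set.mem_setOf_eq, mul_neg] at *; exact Q.neg_mem hx)
      (by
        intro x y hy
        simp only [Set.mem_setOf_eq] at *
        rw [← mul_assoc, Algebra.commutes, mul_assoc]; exact Q.mul_mem_left _ _ hy)
      (by
        intro x y hx
        simp only [Set.mem_setOf_eq] at *
        rw [← mul_assoc]; exact Q.mul_mem_right _ _ hx))
      (by
        intro x hx
        exact (TwoSidedIdeal.mem_mk' _ _ _ _ _ _ _).2 (Q.mul_mem_left _ _ hx)) b
      ((TwoSidedIdeal.mem_mk' _ _ _ _ _ _ _).2 hsb) hb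
    have hst := (TwoSidedIdeal.mem_mk' _ _ _ _ _ _ _).1 htB
    simp only [Set.mem_setOf_eq] at hst
    rw [← map_mul, ← mem_contractTS] at hst
    exact (hp.mem_or_mem (hQ.1 hst)).elim hs ht

lemma PMax.contract {C R : Type*} [CommRing C] [Ring R] [Algebra C R] [Module.Finite C R]
    {p : Ideal C} (hp : p.IsPrime) {Q : TwoSidedIdeal R} (hQ : PMax p Q) :
    contractTS (C := C) Q = p := by
  refine le_antisymm hQ.1 ?_
  have hmulL : ∀ (x y : R), y ∈ p • (⊤ : Submodule C R) → x * y ∈ p • (⊤ : Submodule C R) := by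
    intro x y hy
    refine Submodule.smul_induction_on hy ?_ ?_
    · intro c hc n _
      rw [mul_smul_comm]
      exact Submodule.smul_mem_smul hc trivial
    · intro a b ha hb
      rw [mul_add]; exact add_mem ha hb
  have hmulR : ∀ (x y : R), x ∈ p • (⊤ : Submodule C R) → x * y ∈ p • (⊤ : Submodule C R) := by
    intro y x hy
    refine Submodule.smul_induction_on hy ?_ ?_
    · intro c hc n _
      rw [smul_mul_assoc]
      exact Submodule.smul_mem_smul hc trivial
    · intro a b ha hb
      rw [add_mul]; exact add_mem ha hb
  let P : TwoSidedIdeal R := TwoSidedIdeal.mk' (p • (⊤ : Submodule C R) : Submodule C R)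
    (zero_mem _) (fun h k => add_mem h k) (fun h => neg_mem h) (fun h => hmulL _ _ h)
    (fun h => hmulR _ _ h)
  have hP : ∀ x, x ∈ P ↔ x ∈ p • (⊤ : Submodule C R) := fun x =>
    TwoSidedIdeal.mem_mk' _ _ _ _ _ _ _
  have hle : contractTS (C := C) (Q ⊔ P) ≤ p := by
    intro s hs
    rw [mem_contractTS, TwoSidedIdeal.mem_sup] at hs
    obtain ⟨y, hy, z, hz, hyz⟩ := hs
    rw [hP] at hz
    let N : Submodule C R := (TwoSidedIdeal.asIdeal Q).restrictScalars C
    have hN : ∀ x, x ∈ N ↔ x ∈ Q := fun x => by simp [N, TwoSidedIdeal.mem_asIdeal]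
    obtain ⟨q, hq, -, hq2, hq3⟩ :=
      LinearMap.exists_monic_and_natDegree_eq_and_coeff_mem_pow_and_aeval_eq_zero C
      (algebraMap C (Module.End C (R ⧸ N)) s) p (by
        rintro _ ⟨m, rfl⟩
        obtain ⟨r, rfl⟩ := N.mkQ_surjective m
        rw [Module.algebraMap_end_apply, ← map_smul]
        have h1 : s • r = y * r + z * r := by rw [← add_mul, hyz, Algebra.smul_def]
        have h2 : N.mkQ (y * r) = 0 := by
          rw [Submodule.mkQ_apply, Submodule.Quotient.mk_eq_zero, hN]
          exact Q.mul_mem_right _ _ hy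
        rw [h1, map_add, h2, zero_add]
        have := Submodule.mem_map_of_mem (f := N.mkQ) (hmulR z r hz)
        rw [Submodule.map_smul''] at this
        exact Submodule.smul_mono le_rfl le_top this)
    rw [Polynomial.aeval_algebraMap_apply] at hq3
    have h4 := congrArg (fun f : Module.End C (R ⧸ N) => f (N.mkQ 1)) hq3
    simp only [Module.algebraMap_end_apply, LinearMap.zero_apply] at h4
    rw [← map_smul, Submodule.mkQ_apply, Submodule.Quotient.mk_eq_zero, hN,
      ← Algebra.algebraMap_eq_smul_one, ← mem_contractTS] at h4
    have h5 := hQ.1 h4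
    rw [Polynomial.coe_aeval_eq_eval, Polynomial.eval_eq_sum_range, Finset.sum_range_succ,
      hq.coeff_natDegree, one_mul] at h5
    have h6 : ∑ x ∈ Finset.range q.natDegree, q.coeff x * s ^ x ∈ p := by
      refine sum_mem fun k hk => p.mul_mem_right _ ?_
      have := Finset.mem_range.1 hk
      exact Ideal.pow_le_self (by omega) (hq2 k)
    exact hp.mem_of_pow_mem _ ((p.add_mem_iff_right h6).1 h5)
  intro c hc
  rw [mem_contractTS]
  refine hQ.2 hle le_sup_left (TwoSidedIdeal.mem_sup_right ((hP _).2 ?_))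
  rw [Algebra.algebraMap_eq_smul_one]
  exact Submodule.smul_mem_smul hc trivial

lemma exists_mem_not_mem {R : Type*} [Ring R] {P : TwoSidedIdeal R} (hP : IsPrimeTS P)
    (Q : ℕ → TwoSidedIdeal R) (n : ℕ) (h : ∀ j < n, ¬ Q j ≤ P) :
    ∃ x, (∀ j < n, x ∈ Q j) ∧ x ∉ P := by
  induction n with
  | zero => exact ⟨1, by simp, fun h1 => hP.1 ((TwoSidedIdeal.one_mem_iff _).1 h1)⟩
  | succ n ih =>
    obtain ⟨x, hx, hxP⟩ := ih fun j hj => h j (by omega)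
    have h2 : ∃ y ∈ Q n, y ∉ P := by
      by_contra! hc
      exact h n (by omega) fun y hy => hc y hy
    obtain ⟨y, hy, hyP⟩ := h2
    have h3 : ∃ r, x * r * y ∉ P := by
      by_contra! hc
      exact (hP.2 x y hc).elim hxP hyP
    obtain ⟨r, hr⟩ := h3
    refine ⟨_, fun j hj => ?_, hr⟩
    rcases Nat.lt_succ_iff_lt_or_eq.1 hj with hj | rfl
    · exact (Q j).mul_mem_right _ _ ((Q j).mul_mem_right _ _ (hx j hj))
    · exact (Q j).mul_mem_left _ _ hy

lemma pmax_finite {C R : Type*} [CommRing C] [Ring R] [Algebra C R] [Module.Finite C R]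
    {p : Ideal C} (hp : p.IsPrime) : {Q : TwoSidedIdeal R | PMax p Q}.Finite := by
  by_contra hinf
  let e := Set.Infinite.natEmbedding _ hinf
  let Q : ℕ → TwoSidedIdeal R := fun n => (e n).1
  have hQ : ∀ n, PMax p (Q n) := fun n => (e n).2
  have hne : ∀ i j, i ≠ j → ¬ Q i ≤ Q j := by
    intro i j hij hle
    exact hij (e.injective (Subtype.ext (le_antisymm hle ((hQ i).2 (hQ j).1 hle))))
  choose x hx hxn using fun n => exists_mem_not_mem ((hQ n).isPrime hp) Q n
    fun j hj => hne j n hj.ne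
  have hpQ : ∀ c ∈ p, ∀ n, ∀ r : R, c • r ∈ Q n := by
    intro c hc n r
    rw [Algebra.smul_def]
    refine (Q n).mul_mem_right _ _ ?_
    rw [← mem_contractTS, (hQ n).contract hp]; exact hc
  let M := R ⧸ (p • ⊤ : Submodule C R)
  have hli : LinearIndependent (C ⧸ p) (fun n => (Submodule.mkQ (p • ⊤ : Submodule C R) (x n) : M)) := by
    rw [linearIndependent_iff']
    intro s g hg i hi
    choose c hc using fun n => Ideal.Quotient.mk_surjective (g n)
    have h1 : ∑ n ∈ s, c n • x n ∈ (p • ⊤ : Submodule C R) := by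
      rw [← Submodule.Quotient.mk_eq_zero, ← Submodule.mkQ_apply, map_sum, ← hg]
      refine Finset.sum_congr rfl fun n _ => ?_
      rw [← hc n, map_smul]
      rfl
    have h2 : ∀ n, ∑ n ∈ s, c n • x n ∈ Q n := by
      intro n
      refine Submodule.smul_induction_on h1 (fun c hc r _ => hpQ c hc n r) ?_
      intro a b ha hb
      exact (Q n).add_mem ha hb
    suffices ∀ i ∈ s, c i ∈ p by
      rw [← hc i]; exact Ideal.Quotient.eq_zero_iff_mem.2 (this i hi)
    intro i
    induction i using Nat.strong_induction_on with
    | _ i ih =>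
    intro hi
    have h3 := h2 i
    rw [← Finset.add_sum_erase _ _ hi] at h3
    have h4 : ∑ n ∈ s.erase i, c n • x n ∈ Q i := by
      refine TwoSidedIdeal.finsetSum_mem _ _ _ fun n hn => ?_
      obtain ⟨hni, hns⟩ := Finset.mem_erase.1 hn
      rcases lt_or_gt_of_ne hni with h | h
      · exact hpQ _ (ih n h hns) _ _
      · rw [Algebra.smul_def]
        exact (Q i).mul_mem_left _ _ (hx n i h)
    have h5 : c i • x i ∈ Q i := by
      have := (Q i).sub_mem h3 h4
      rwa [add_sub_cancel_right] at this
    rw [← (hQ i).contract hp, mem_contractTS]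
    refine (((hQ i).isPrime hp).2 _ (x i) fun r => ?_).resolve_right (hxn i)
    rw [Algebra.commutes, mul_assoc, ← Algebra.smul_def]
    exact (Q i).mul_mem_left _ _ h5
  have : Nontrivial (C ⧸ p) := Ideal.Quotient.nontrivial_iff.2 hp.ne_top
  have : Module.Finite C M := inferInstance
  have : Module.Finite (C ⧸ p) M := Module.Finite.of_restrictScalars_finite C (C ⧸ p) M
  have := hli.finite
  exact not_finite ℕ

lemma exists_chain {C R : Type*} [CommRing C] [Ring R]
    [Algebra C R] (hinj : Function.Injective (algebraMap C R)) [Module.Finite C R]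
    (f : ℕ → Ideal C) (hf : Monotone f) (hfp : ∀ n, (f n).IsPrime) :
    ∃ g : ℕ → TwoSidedIdeal R, Monotone g ∧ ∀ n, PMax (f n) (g n) := by
  choose G hG1 hG2 using exists_pmax (C := C) (R := R)
  have h0 : contractTS (C := C) (⊥ : TwoSidedIdeal R) ≤ f 0 := by
    intro c hc
    rw [mem_contractTS, TwoSidedIdeal.mem_bot] at hc
    rw [(injective_iff_map_eq_zero _).1 hinj c hc]
    exact zero_mem _
  have hs : ∀ n (J : TwoSidedIdeal R), PMax (f n) J → contractTS (C := C) J ≤ f (n+1) :=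
    fun n J hJ => hJ.1.trans (hf n.le_succ)
  let g : ∀ n, {J : TwoSidedIdeal R // PMax (f n) J} := fun n =>
    Nat.rec ⟨G (f 0) ⊥ h0, hG2 _ _ _⟩
      (fun n J => ⟨G (f (n+1)) J.1 (hs n J.1 J.2), hG2 _ _ _⟩) n
  exact ⟨fun n => (g n).1, monotone_nat_of_le_succ fun n => hG1 _ _ (hs n (g n).1 (g n).2),
    fun n => (g n).2⟩

theorem exists_prime_lying_over_with_ge_height {C R : Type*} [CommRing C] [Ring R]
    [Algebra C R] (hinj : Function.Injective (algebraMap C R)) [Module.Finite C R]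
    (p : Ideal C) (hp : p.IsPrime) :
    ∃ Q : TwoSidedIdeal R, IsPrimeTS Q ∧ contractTS (C := C) Q = p ∧
      cHeight p ≤ tsHeight Q := by
  obtain ⟨g0, -, hg0⟩ := exists_chain (R := R) hinj (fun _ => p) monotone_const (fun _ => hp)
  obtain ⟨Q, hQ, hmax⟩ := Set.exists_max_image {Q : TwoSidedIdeal R | PMax p Q} tsHeight
    (pmax_finite hp) ⟨g0 0, hg0 0⟩
  refine ⟨Q, PMax.isPrime hp hQ, PMax.contract hp hQ, sSup_le ?_⟩
  rintro _ ⟨m, rfl, f, hf, hfp, hfl⟩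
  obtain ⟨g, hg, hgm⟩ := exists_chain (R := R) hinj
    (fun n => f ⟨min n m, by omega⟩)
    (fun a b hab => hf.monotone (by
      rw [Fin.mk_le_mk]; exact min_le_min_right _ hab)) (fun n => hfp _)
  have hm : PMax p (g m) := by
    have := hgm m
    simp only [min_self] at this
    rw [← hfl]; exact this
  refine le_trans ?_ (hmax (g m) hm)
  refine le_sSup ⟨m, rfl, fun i => g i, ?_, fun i => (hgm i).isPrime (hfp _), rfl⟩
  intro i j hij
  refine lt_of_le_of_ne (hg hij.le) fun h => ?_
  have hi := (hgm i).contract (hfp _)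
  have hj := (hgm j).contract (hfp _)
  dsimp only at h
  rw [h, hj] at hi
  have h2 := hf.injective hi
  rw [Fin.mk.injEq] at h2
  have h3 : (i : ℕ) < j := hij
  omega
end

section
/- Let R be a commutative noetherian ring which is equicodimensional (all maximal ideals have the same height) and Cohen-Macaulay. Then for every prime ideal p of R, Krull-dim(R) = Krull-dim(R/p) + height(p). -/
/-- A two-sided ideal is maximal. -/
def IsMaximalTS {R : Type*} [Ring R] (M : TwoSidedIdeal R) : Prop :=
  M ≠ ⊤ ∧ ∀ J : TwoSidedIdeal R, M < J → J = ⊤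

/-- Krull dimension of a (possibly noncommutative) ring: the supremum of the
heights of its prime two-sided ideals. -/
noncomputable def tsKdim (R : Type*) [Ring R] : ℕ∞ :=
  ⨆ P : {P : TwoSidedIdeal R // IsPrimeTS P}, tsHeight P.1

/-- Krull dimension of a commutative ring: the supremum of heights of primes. -/
noncomputable def cKdim (C : Type*) [CommRing C] : ℕ∞ :=
  ⨆ p : {p : Ideal C // p.IsPrime}, cHeight p.1

/-- The grade `G_C(I, M)`: the supremum of the lengths of `M`-regular sequences
consisting of elements of the ideal `I`. -/
noncomputable def cGrade {C : Type*} [CommRing C] (I : Ideal C) (M : Type*)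
    [AddCommGroup M] [Module C M] : ℕ∞ :=
  sSup {n : ℕ∞ | ∃ rs : List C, n = rs.length ∧ (∀ x ∈ rs, x ∈ I) ∧
    RingTheory.Sequence.IsRegular M rs}

/-- `M` is a maximal Cohen-Macaulay `C`-module: for every maximal ideal `m` of `C`,
the `m`-grade of `M` equals the height of `m` (that is, `Kdim (C_m)`). -/
def IsMaximalCohenMacaulay (C : Type*) [CommRing C] (M : Type*)
    [AddCommGroup M] [Module C M] : Prop :=
  ∀ m : Ideal C, m.IsMaximal → cGrade m M = cHeight m

namespace CMaux

/-- `x` is a nonzerodivisor modulo `I`. -/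
def NZ {A : Type*} [CommRing A] (I : Ideal A) (x : A) : Prop := ∀ a, x * a ∈ I → a ∈ I

/-- `m`-depth of `A/I` is at least `n`. -/
def D {A : Type*} [CommRing A] (m : Ideal A) : ℕ → Ideal A → Prop
  | 0, _ => True
  | n + 1, I => ∃ x ∈ m, NZ I x ∧ D m n (I ⊔ Ideal.span {x})

/-- associated primes of `A/I`. -/
def AssI {A : Type*} [CommRing A] (I P : Ideal A) : Prop :=
  P.IsPrime ∧ ∃ u, ∀ r, r ∈ P ↔ r * u ∈ I

variable {A : Type*} [CommRing A]

theorem mem_sup_span {I : Ideal A} {x a : A} :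
    a ∈ I ⊔ Ideal.span {x} ↔ ∃ i ∈ I, ∃ b, i + x * b = a := by
  rw [Submodule.mem_sup]
  constructor
  · rintro ⟨i, hi, z, hz, rfl⟩
    obtain ⟨b, rfl⟩ := Ideal.mem_span_singleton'.1 hz
    exact ⟨i, hi, b, by ring⟩
  · rintro ⟨i, hi, b, rfl⟩
    exact ⟨i, hi, x * b, Ideal.mul_mem_right _ _ (Ideal.mem_span_singleton_self x), rfl⟩

theorem assI_iff [IsNoetherianRing A] (I P : Ideal A) :
    IsAssociatedPrime P (A ⧸ I) ↔ AssI I P := by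
  rw [isAssociatedPrime_iff]
  refine and_congr_right fun _ => ?_
  constructor
  · rintro ⟨x, rfl⟩
    obtain ⟨u, rfl⟩ := Ideal.Quotient.mk_surjective x
    refine ⟨u, fun r => ?_⟩
    rw [Submodule.mem_colon_singleton, Submodule.mem_bot, ← Ideal.Quotient.eq_zero_iff_mem, map_mul]
    rfl
  · rintro ⟨u, hu⟩
    refine ⟨Ideal.Quotient.mk I u, ?_⟩
    ext r
    rw [Submodule.mem_colon_singleton, Submodule.mem_bot, hu, ← Ideal.Quotient.eq_zero_iff_mem,
      map_mul]
    rfl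

theorem exists_assI [IsNoetherianRing A] {I : Ideal A} {u : A} (hu : u ∉ I) :
    ∃ P, AssI I P ∧ ∀ r, r * u ∈ I → r ∈ P := by
  obtain ⟨P, hP, h⟩ := exists_le_isAssociatedPrime_of_isNoetherianRing A (Ideal.Quotient.mk I u)
    (by rwa [Ne, Ideal.Quotient.eq_zero_iff_mem])
  refine ⟨P, (assI_iff I P).1 hP, fun r hr => h ?_⟩
  rw [Submodule.mem_colon_singleton, Submodule.mem_bot]
  rw [← Ideal.Quotient.eq_zero_iff_mem, map_mul] at hr
  exact hr

theorem exists_nz [IsNoetherianRing A] (p I J K : Ideal A)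
    (hI : ∀ q, AssI I q → ¬ p ≤ q) (hJ : ∀ q, AssI J q → ¬ p ≤ q) (hK : ∀ q, AssI K q → ¬ p ≤ q) :
    ∃ z ∈ p, NZ I z ∧ NZ J z ∧ NZ K z := by
  have fin : {q | AssI I q ∨ AssI J q ∨ AssI K q}.Finite := by
    have h : ∀ I : Ideal A, {q | AssI I q}.Finite := fun I =>
      (associatedPrimes.finite A (A ⧸ I)).subset fun q hq => (assI_iff I q).2 hq
    exact (h I).union ((h J).union (h K))
  have := (Ideal.subset_union_prime_finite fin (f := id) 0 0 (I := p)
    (by rintro i (h | h | h) _ _ <;> exact h.1)).not.2 (by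
      rintro ⟨q, h | h | h, hq⟩
      · exact hI q h hq
      · exact hJ q h hq
      · exact hK q h hq)
  obtain ⟨z, hz, hz'⟩ := Set.not_subset.1 this
  simp only [Set.mem_iUnion, not_exists, id] at hz'
  have key : ∀ L, (∀ q, AssI L q → AssI I q ∨ AssI J q ∨ AssI K q) → NZ L z := by
    intro L hL a ha
    by_contra h
    obtain ⟨P, hP, h'⟩ := exists_assI h
    exact hz' P (hL P hP) (h' z ha)
  exact ⟨z, hz, key I fun q h => .inl h, key J fun q h => .inr (.inl h),
    key K fun q h => .inr (.inr h)⟩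

/-- no socle -/
def NS (m I : Ideal A) : Prop := ∀ u, (∀ r ∈ m, r * u ∈ I) → u ∈ I

theorem NS.ass {m I : Ideal A} [hm : m.IsMaximal] (h : NS m I) (q) (hq : AssI I q) : ¬ m ≤ q := by
  intro hle
  obtain ⟨hp, u, hu⟩ := hq
  have := hm.eq_of_le hp.ne_top hle
  subst this
  have := h u fun r hr => (hu r).1 hr
  exact hp.ne_top ((Ideal.eq_top_iff_one _).2 ((hu 1).2 (by simpa using this)))

theorem NZ.ns {m I : Ideal A} {z : A} (hz : z ∈ m) (h : NZ I z) : NS m I :=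
  fun u hu => h u (hu z hz)

theorem ns_swap {m I : Ideal A} {x y : A} (hy' : y ∈ m) (hx : NZ I x) (hy : NZ I y)
    (h : NS m (I ⊔ Ideal.span {y})) : NS m (I ⊔ Ideal.span {x}) := by
  intro u hu
  obtain ⟨i, hi, v, hv⟩ := mem_sup_span.1 (hu y hy')
  have hvm : v ∈ I ⊔ Ideal.span {y} := by
    apply h
    intro r hr
    obtain ⟨j, hj, w, hw⟩ := mem_sup_span.1 (hu r hr)
    have : r * v - y * w ∈ I := by
      apply hx
      have : x * (r * v - y * w) = y * j - r * i := by linear_combination r * hv - y * hw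
      rw [this]
      exact I.sub_mem (I.mul_mem_left _ hj) (I.mul_mem_left _ hi)
    exact mem_sup_span.2 ⟨_, this, w, by ring⟩
  obtain ⟨j, hj, w, hw⟩ := mem_sup_span.1 hvm
  have : u - x * w ∈ I := by
    apply hy
    have : y * (u - x * w) = i + x * j := by linear_combination -hv - x * hw
    rw [this]
    exact I.add_mem hi (I.mul_mem_left _ hj)
  exact mem_sup_span.2 ⟨_, this, w, by ring⟩

theorem nz_swap {I : Ideal A} {x z : A} (hx : NZ I x) (hz : NZ (I ⊔ Ideal.span {x}) z) :
    NZ (I ⊔ Ideal.span {z}) x := by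
  intro u hu
  obtain ⟨i, hi, v, hv⟩ := mem_sup_span.1 hu
  obtain ⟨j, hj, w, hw⟩ := mem_sup_span.1 (hz v (mem_sup_span.2 ⟨-i, I.neg_mem hi, u, by
    linear_combination -hv⟩))
  have : u - z * w ∈ I := by
    apply hx
    have : x * (u - z * w) = i + z * j := by linear_combination -hv - z * hw
    rw [this]
    exact I.add_mem hi (I.mul_mem_left _ hj)
  exact mem_sup_span.2 ⟨_, this, w, by ring⟩

theorem D_exchange [IsNoetherianRing A] (m : Ideal A) [hm : m.IsMaximal] (n : ℕ) :
    ∀ (I : Ideal A) (x : A), x ∈ m → NZ I x → D m (n + 1) I → D m n (I ⊔ Ideal.span {x}) := by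
  induction n with
  | zero => intros; trivial
  | succ n ih =>
    rintro I x hxm hx ⟨y, hym, hy, hD⟩
    have hD' := hD
    obtain ⟨z0, hz0m, hz0, -⟩ := hD'
    have n1 : NS m (I ⊔ Ideal.span {y}) := hz0.ns hz0m
    have n2 := ns_swap hym hx hy n1
    obtain ⟨z, hzm, hzI, hzx, hzy⟩ := exists_nz m I (I ⊔ Ideal.span {x}) (I ⊔ Ideal.span {y})
      (NS.ass (hx.ns hxm)) n2.ass n1.ass
    have h1 := ih _ z hzm hzy hD
    rw [sup_right_comm] at h1
    have h2 := ih _ x hxm (nz_swap hx hzx) ⟨y, hym, nz_swap hy hzy, h1⟩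
    rw [sup_right_comm] at h2
    exact ⟨z, hzm, hzx, h2⟩

open IsLocalRing in
theorem chain_of_ass [IsNoetherianRing A] [IsLocalRing A] (n : ℕ) :
    ∀ (I : Ideal A) (p : PrimeSpectrum A), AssI I p.asIdeal → D (maximalIdeal A) n I →
      ∃ l : LTSeries (PrimeSpectrum A), l.head = p ∧ l.length = n := by
  induction n with
  | zero => intro I p _ _; exact ⟨RelSeries.singleton _ p, rfl, rfl⟩
  | succ n ih =>
    rintro I p ⟨hp, u0, hu0⟩ ⟨x, hxm, hx, hD⟩
    have hu0I : u0 ∉ I := fun h => hp.ne_top ((Ideal.eq_top_iff_one _).2 ((hu0 1).2 (by simpa using h)))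
    let N : Ideal A :=
      { carrier := {u | ∀ r ∈ p.asIdeal, r * u ∈ I}
        add_mem' := fun {a b} ha hb r hr => by rw [mul_add]; exact I.add_mem (ha r hr) (hb r hr)
        zero_mem' := fun r _ => by simp
        smul_mem' := fun c a ha r hr => by
          rw [smul_eq_mul, mul_left_comm]; exact I.mul_mem_left _ (ha r hr) }
    have hN : ∀ u, u ∈ N ↔ ∀ r ∈ p.asIdeal, r * u ∈ I := fun u => Iff.rfl
    have : ∃ u ∈ N, u ∉ I ⊔ Ideal.span {x} := by
      by_contra! hcon
      have hle : N ≤ I ⊔ maximalIdeal A • N := by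
        intro u hu
        obtain ⟨i, hi, a, rfl⟩ := mem_sup_span.1 (hcon u hu)
        have ha : a ∈ N := by
          intro r hr
          apply hx
          have : x * (r * a) = r * (i + x * a) - r * i := by ring
          rw [this]
          exact I.sub_mem (hu r hr) (I.mul_mem_left _ hi)
        exact Submodule.add_mem_sup hi (Submodule.smul_mem_smul hxm ha)
      have := Submodule.le_of_le_smul_of_le_jacobson_bot (IsNoetherian.noetherian N)
        (IsLocalRing.maximalIdeal_le_jacobson ⊥) hle
      exact hu0I (this fun r hr => (hu0 r).1 hr)
    obtain ⟨u, huN, hu⟩ := this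
    obtain ⟨q, hq, hq'⟩ := exists_assI hu
    obtain ⟨l, hl, hl'⟩ := ih _ ⟨q, hq.1⟩ hq hD
    have hlt : p < l.head := by
      rw [hl]
      refine lt_of_le_of_ne (fun r hr => hq' r (Submodule.mem_sup_left (huN r hr))) fun h => ?_
      have h1 : x ∈ q := hq' x (Submodule.mem_sup_right
        (Ideal.mul_mem_right _ _ (Ideal.mem_span_singleton_self x)))
      have h2 : x ∈ p.asIdeal := by rw [h]; exact h1
      exact hu0I (hx _ ((hu0 x).1 h2))
    exact ⟨l.cons p hlt, by simp, by simp [hl']⟩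

open IsLocalRing in
theorem chain_through [IsNoetherianRing A] [IsLocalRing A] (n : ℕ) :
    ∀ (I : Ideal A) (p : PrimeSpectrum A), I ≤ p.asIdeal → D (maximalIdeal A) n I →
      ∃ l l' : LTSeries (PrimeSpectrum A), I ≤ l.head.asIdeal ∧ l.last = p ∧ p ≤ l'.head ∧
        n ≤ l.length + l'.length := by
  induction n with
  | zero =>
    intro I p h _
    exact ⟨RelSeries.singleton _ p, RelSeries.singleton _ p, h, rfl, le_rfl, by simp⟩
  | succ n ih =>
    intro I p hI hD
    by_cases hc : ∃ q, AssI I q ∧ p.asIdeal ≤ q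
    · obtain ⟨q, hq, hpq⟩ := hc
      obtain ⟨l', h1, h2⟩ := chain_of_ass _ I ⟨q, hq.1⟩ hq hD
      exact ⟨RelSeries.singleton _ p, l', hI, rfl, by rw [h1]; exact hpq, by simp [h2]⟩
    · have hc' : ∀ q, AssI I q → ¬ p.asIdeal ≤ q := fun q h h' => hc ⟨q, h, h'⟩
      obtain ⟨x, hxp, hx, -⟩ := exists_nz p.asIdeal I I I hc' hc' hc'
      have hD' := D_exchange (maximalIdeal A) n I x (le_maximalIdeal p.2.ne_top hxp) hx hD
      obtain ⟨l, l', h1, h2, h3, h4⟩ := ih _ p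
        (sup_le hI ((Ideal.span_singleton_le_iff_mem _).2 hxp)) hD'
      obtain ⟨q, hq, hql⟩ := Ideal.exists_minimalPrimes_le (le_sup_left.trans h1)
      have hlt : (⟨q, hq.1.1⟩ : PrimeSpectrum A) < l.head := by
        refine lt_of_le_of_ne hql fun h => ?_
        have hxq : x ∈ q := by
          have : x ∈ l.head.asIdeal :=
            h1 (Submodule.mem_sup_right (Ideal.mem_span_singleton_self x))
          rw [← h] at this; exact this
        obtain ⟨y, hy, hy'⟩ := Ideal.exists_mul_mem_of_mem_minimalPrimes hq hxq
        exact hy (hx y hy')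
      exact ⟨l.cons _ hlt, l', by simpa using hq.1.2, by simpa using h2, h3, by simp; omega⟩

theorem D_localize (m : Ideal A) [m.IsPrime] (n : ℕ) : ∀ I, D m n I →
    D (IsLocalRing.maximalIdeal (Localization.AtPrime m)) n
      (I.map (algebraMap A (Localization.AtPrime m))) := by
  induction n with
  | zero => intros; trivial
  | succ n ih =>
    rintro I ⟨x, hxm, hx, hD⟩
    refine ⟨algebraMap A _ x, ?_, ?_, ?_⟩
    · rw [← Localization.AtPrime.map_eq_maximalIdeal]
      exact Ideal.mem_map_of_mem _ hxm
    · intro a ha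
      obtain ⟨b, s, rfl⟩ := IsLocalization.exists_mk'_eq m.primeCompl a
      rw [IsLocalization.mul_mk'_eq_mk'_of_mul,
        IsLocalization.mk'_mem_map_algebraMap_iff] at ha
      obtain ⟨t, ht, h⟩ := ha
      rw [IsLocalization.mk'_mem_map_algebraMap_iff]
      exact ⟨t, ht, hx _ (by rwa [mul_left_comm])⟩
    · have := ih _ hD
      rwa [Ideal.map_sup, Ideal.map_span, Set.image_singleton] at this

open RingTheory.Sequence in
theorem D_of_regular (m : Ideal A) (rs : List A) (hm : ∀ x ∈ rs, x ∈ m)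
    (h : IsWeaklyRegular A rs) : D m rs.length ⊥ := by
  rw [isWeaklyRegular_iff] at h
  have : ∀ k i, i + k = rs.length → D m k (Ideal.ofList (rs.take i)) := by
    intro k
    induction k with
    | zero => intros; trivial
    | succ k ih =>
      intro i hi
      have hlt : i < rs.length := by omega
      refine ⟨rs[i], hm _ (List.getElem_mem _), ?_, ?_⟩
      · intro a ha
        have := h i hlt
        have htop : (Ideal.ofList (rs.take i) • ⊤ : Submodule A A) = Ideal.ofList (rs.take i) := by
          simp
        rw [htop] at this
        rw [← Ideal.Quotient.eq_zero_iff_mem]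
        apply this
        change rs[i] • Ideal.Quotient.mk _ a = rs[i] • (0 : A ⧸ Ideal.ofList (rs.take i))
        rw [smul_zero]
        exact Ideal.Quotient.eq_zero_iff_mem.2 ha
      · have := ih (i + 1) (by omega)
        rwa [List.take_add_one, List.getElem?_eq_getElem hlt, Option.toList_some, Ideal.ofList_append,
          Ideal.ofList_singleton] at this
  simpa using this rs.length 0 (by simp)

theorem cHeight_eq (p : PrimeSpectrum A) : cHeight p.asIdeal = Order.height p := by
  apply le_antisymm
  · apply sSup_le
    rintro _ ⟨n, rfl, f, hf, hp, hl⟩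
    let l : LTSeries (PrimeSpectrum A) := LTSeries.mk n (fun i => ⟨f i, hp i⟩) (fun i j h => hf h)
    have : l.last = p := PrimeSpectrum.ext hl
    exact Order.length_le_height (p := l) this.le
  · rw [Order.height_eq_iSup_last_eq]
    refine iSup₂_le fun l hl => le_sSup ?_
    refine ⟨l.length, rfl, fun i => (l i).asIdeal, fun i j h => l.strictMono h, fun i => (l i).2, ?_⟩
    rw [← hl]; rfl

theorem cKdim_eq (C : Type*) [CommRing C] : cKdim C = ⨆ p : PrimeSpectrum C, Order.height p := by
  apply le_antisymm
  · exact iSup_le fun p => (cHeight_eq ⟨p.1, p.2⟩).le.trans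
      (le_iSup (fun p : PrimeSpectrum C => Order.height p) ⟨p.1, p.2⟩)
  · exact iSup_le fun p => (cHeight_eq p).ge.trans
      (le_iSup (fun p : {p : Ideal C // p.IsPrime} => cHeight p.1) ⟨p.1, p.2⟩)

theorem cKdim_quot_eq (p : PrimeSpectrum A) : cKdim (A ⧸ p.asIdeal) = Order.coheight p := by
  have h : ((cKdim (A ⧸ p.asIdeal) : ℕ∞) : WithBot ℕ∞) = (Order.coheight p : ℕ∞) := by
    rw [cKdim_eq, ← Order.krullDim_eq_iSup_height_of_nonempty, Order.coheight_eq_krullDim_Ici]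
    exact ringKrullDim_quotient p.asIdeal
  exact WithBot.coe_injective h

end CMaux

theorem kdim_eq_kdim_quotient_add_height_of_CM {R : Type*} [CommRing R] [IsNoetherianRing R]
    (hequi : ∀ m : Ideal R, m.IsMaximal → cHeight m = cKdim R)
    (hCM : ∀ m : Ideal R, m.IsMaximal → cGrade m R = cHeight m)
    (p : Ideal R) (hp : p.IsPrime) :
    cKdim R = cKdim (R ⧸ p) + cHeight p := by
  let P : PrimeSpectrum R := ⟨p, hp⟩
  have h1 : cKdim (R ⧸ p) = Order.coheight P := CMaux.cKdim_quot_eq P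
  have h2 : cHeight p = Order.height P := CMaux.cHeight_eq P
  apply le_antisymm
  · obtain ⟨m, hm, hpm⟩ := Ideal.exists_le_maximal p hp.ne_top
    rw [← hequi m hm, ← hCM m hm, h1, h2]
    apply sSup_le
    rintro _ ⟨rs, rfl, hrs, hreg⟩
    have := hm.isPrime
    have hD := CMaux.D_localize m _ _ (CMaux.D_of_regular m rs hrs hreg.toIsWeaklyRegular)
    have hdis : Disjoint (m.primeCompl : Set R) (p : Set R) :=
      Set.disjoint_left.2 fun x hx hxp => hx (hpm hxp)
    let S := Localization.AtPrime m
    have : IsNoetherianRing S := IsLocalization.isNoetherianRing m.primeCompl S inferInstance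
    let Q : PrimeSpectrum S := ⟨p.map (algebraMap R S),
      IsLocalization.isPrime_of_isPrime_disjoint m.primeCompl S p hp hdis⟩
    have hQ : PrimeSpectrum.comap (algebraMap R S) Q = P :=
      PrimeSpectrum.ext (IsLocalization.under_map_of_isPrime_disjoint m.primeCompl S hp hdis)
    obtain ⟨l, l', -, h4, h5, h6⟩ := CMaux.chain_through _ _ Q (by simp) hD
    have hmono : StrictMono (PrimeSpectrum.comap (algebraMap R S)) :=
      Monotone.strictMono_of_injective (fun a b h => Ideal.comap_mono h)
        (PrimeSpectrum.localization_comap_injective S m.primeCompl)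
    have e1 := Order.length_le_height (p := l.map _ hmono) (x := P) (by simp [h4, hQ])
    have e2 := Order.length_le_coheight (p := l'.map _ hmono) (x := P) (by
      rw [← hQ]; simpa using hmono.monotone h5)
    rw [add_comm]
    refine le_trans ?_ (add_le_add e1 e2)
    exact_mod_cast h6
  · have : Nonempty (PrimeSpectrum R) := ⟨P⟩
    have e := (Order.krullDim_eq_iSup_height_of_nonempty (α := PrimeSpectrum R)).symm.trans
      Order.krullDim_eq_iSup_height_add_coheight_of_nonempty
    rw [CMaux.cKdim_eq R, WithBot.coe_injective e, h1, h2, add_comm]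
    exact le_iSup (fun a : PrimeSpectrum R => Order.height a + Order.coheight a) P
end

section
/- Let R be a noetherian ring which is a finite module over its center Z(R) and which is Z(R)-Macaulay. Then every annihilator prime of R (as a right module over itself) is a minimal prime, and consequently R has an artinian classical quotient ring. -/
/-- An element of a ring is regular if it is neither a left nor a right zero divisor. -/
def IsRegularElem {R : Type*} [Ring R] (s : R) : Prop :=
  (∀ x : R, s * x = 0 → x = 0) ∧ (∀ x : R, x * s = 0 → x = 0)


theorem aux_formanek {C M : Type*} [CommRing C] [AddCommGroup M] [Module C M] [Module.Finite C M]
    (h : ∀ a : C, (∃ m : M, a • m ≠ 0) →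
      IsNoetherian C (M ⧸ LinearMap.range (LinearMap.lsmul C M a))) : IsNoetherian C M := by
  classical
  obtain ⟨G, hG⟩ := (Module.finite_def (R := C) (M := M)).1 inferInstance
  -- Zorn
  let Γ : Set (Submodule C M) := {N | ∀ a : C, (∀ g ∈ G, a • g ∈ N) → ∀ m : M, a • m = 0}
  have hbot : (⊥ : Submodule C M) ∈ Γ := by
    intro a ha m
    have hm : m ∈ Submodule.span C (G : Set M) := by rw [hG]; trivial
    induction hm using Submodule.span_induction with
    | mem x hx => simpa using ha x hx
    | zero => simp
    | add x y _ _ hx hy => rw [smul_add, hx, hy, add_zero]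
    | smul c x _ hx => rw [smul_comm, hx, smul_zero]
  obtain ⟨N, -, hN⟩ : ∃ N, ⊥ ≤ N ∧ Maximal (· ∈ Γ) N := by
    refine zorn_le_nonempty₀ Γ ?_ ⊥ hbot
    intro c hc hchain y hy
    refine ⟨sSup c, ?_, fun z hz => le_sSup hz⟩
    intro a ha
    have hdir : DirectedOn (· ≤ ·) c := hchain.directedOn
    have : ∀ F : Finset M, (∀ g ∈ F, a • g ∈ sSup c) → ∃ z ∈ c, ∀ g ∈ F, a • g ∈ z := by
      intro F
      induction F using Finset.induction_on with
      | empty => intro _; exact ⟨y, hy, by simp⟩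
      | insert g F _ ih =>
        intro hF
        obtain ⟨z, hz, hzF⟩ := ih (fun g hg => hF g (Finset.mem_insert_of_mem hg))
        have := hF g (Finset.mem_insert_self _ _)
        rw [Submodule.mem_sSup_of_directed ⟨y, hy⟩ hdir] at this
        obtain ⟨w, hw, hgw⟩ := this
        obtain ⟨v, hv, hzv, hwv⟩ := hdir z hz w hw
        refine ⟨v, hv, fun g' hg' => ?_⟩
        rcases Finset.mem_insert.1 hg' with rfl | hg'
        · exact hwv hgw
        · exact hzv (hzF g' hg')
    obtain ⟨z, hz, hz'⟩ := this G ha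
    exact hc hz a hz'
  -- M / N is noetherian
  have hnoeth : IsNoetherian C (M ⧸ N) := by
    refine ⟨fun L => ?_⟩
    by_cases hL : L = ⊥
    · rw [hL]; exact Submodule.fg_bot
    have hlt : ¬ L.comap N.mkQ ∈ Γ := by
      intro hmem
      apply hL
      have hle : N ≤ L.comap N.mkQ := Submodule.le_comap_mkQ N L
      have h2 := hN.le_of_ge hmem hle
      rw [eq_bot_iff]
      intro x hx
      obtain ⟨x, rfl⟩ := N.mkQ_surjective x
      have := h2 hx
      simpa using this
    simp only [Γ, Set.mem_ofPred_eq, not_forall] at hlt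
    obtain ⟨a, ha, m, ham⟩ := hlt
    have haL : ∀ m : M, a • m ∈ L.comap N.mkQ := by
      intro m
      have hm : m ∈ Submodule.span C (G : Set M) := by rw [hG]; trivial
      induction hm using Submodule.span_induction with
      | mem x hx => exact ha x hx
      | zero => simp
      | add x y _ _ hx hy => rw [smul_add]; exact add_mem hx hy
      | smul c x _ hx => rw [smul_comm]; exact Submodule.smul_mem _ _ hx
    have hn := h a ⟨m, ham⟩
    let K : Submodule C (M ⧸ N) := LinearMap.range (LinearMap.lsmul C (M ⧸ N) a)
    have hK : IsNoetherian C ((M ⧸ N) ⧸ K) := by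
      let φ : (M ⧸ LinearMap.range (LinearMap.lsmul C M a)) →ₗ[C] ((M ⧸ N) ⧸ K) :=
        Submodule.liftQ _ (K.mkQ ∘ₗ N.mkQ) (by
          rintro _ ⟨x, rfl⟩
          simp only [LinearMap.mem_ker, LinearMap.comp_apply, Submodule.mkQ_apply]
          rw [Submodule.Quotient.mk_eq_zero]
          exact ⟨N.mkQ x, by simp⟩)
      refine isNoetherian_of_surjective φ (LinearMap.range_eq_top.2 ?_)
      intro y
      obtain ⟨y, rfl⟩ := K.mkQ_surjective y
      obtain ⟨y, rfl⟩ := N.mkQ_surjective y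
      exact ⟨Submodule.mkQ _ y, by simp [φ]⟩
    refine Submodule.fg_of_fg_map_of_fg_inf_ker K.mkQ (hK.noetherian _) ?_
    have : L ⊓ LinearMap.ker K.mkQ = K := by
      rw [Submodule.ker_mkQ]
      refine inf_eq_right.2 ?_
      rintro _ ⟨x, rfl⟩
      obtain ⟨x, rfl⟩ := N.mkQ_surjective x
      simpa using haL x
    rw [this]
    exact Submodule.FG.of_finite
  -- conclusion
  let ψ : C →ₗ[C] (G → M ⧸ N) := LinearMap.pi fun g => LinearMap.toSpanSingleton C (M ⧸ N) (N.mkQ g)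
  have hker : ∀ a ∈ LinearMap.ker ψ, ∀ m : M, a • m = 0 := by
    intro a ha
    refine hN.prop a ?_
    intro g hg
    have := congrFun (LinearMap.mem_ker.1 ha) ⟨g, hg⟩
    simp only [ψ, LinearMap.pi_apply, LinearMap.toSpanSingleton_apply, Pi.zero_apply] at this
    rw [← map_smul] at this
    exact (Submodule.Quotient.mk_eq_zero N).1 this
  have hq : IsNoetherian C (C ⧸ LinearMap.ker ψ) :=
    isNoetherian_of_linearEquiv ψ.quotKerEquivRange.symm
  let χ : (G → C ⧸ LinearMap.ker ψ) →ₗ[C] M :=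
    ∑ g : G, (Submodule.liftQ _ (LinearMap.toSpanSingleton C M (g : M))
      (fun a ha => by simpa using hker a ha g)) ∘ₗ LinearMap.proj g
  refine isNoetherian_of_surjective χ ?_
  rw [eq_top_iff, ← hG, Submodule.span_le]
  intro g hg
  refine ⟨Pi.single ⟨g, hg⟩ (Submodule.mkQ _ 1), ?_⟩
  simp only [χ, LinearMap.sum_apply, LinearMap.comp_apply, LinearMap.proj_apply]
  rw [Finset.sum_eq_single (⟨g, hg⟩ : G)]
  · rw [Pi.single_eq_same, Submodule.mkQ_apply, Submodule.liftQ_apply]; simp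
  · intro b _ hb
    simp [Pi.single_eq_of_ne hb]
  · simp

theorem aux_noeth {C R : Type*} [CommRing C] [Ring R] [Algebra C R] [Module.Finite C R]
    [IsNoetherianRing R] : IsNoetherian C R := by
  by_contra hcon
  let 𝒮 : Set (Submodule R R) := {L | ¬ IsNoetherian C (R ⧸ L)}
  have h0 : (⊥ : Submodule R R) ∈ 𝒮 := by
    intro h
    apply hcon
    exact isNoetherian_of_linearEquiv
      ((Submodule.quotEquivOfEqBot (⊥ : Submodule R R) rfl).restrictScalars C)
  obtain ⟨L, hL, hmax⟩ := set_has_maximal_iff_noetherian.2 (inferInstanceAs (IsNoetherian R R)) 𝒮 ⟨_, h0⟩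
  apply hL
  refine aux_formanek ?_
  rintro a ⟨m, hm⟩
  obtain ⟨m, rfl⟩ := L.mkQ_surjective m
  let L' : Submodule R R := L ⊔ Submodule.span R {algebraMap C R a}
  have hlt : L < L' := by
    refine lt_of_le_of_ne le_sup_left ?_
    intro he
    apply hm
    have h1 : algebraMap C R a ∈ L := by
      rw [he]; exact Submodule.mem_sup_right (Submodule.mem_span_singleton_self _)
    have h2 : a • m ∈ L := by
      rw [Algebra.smul_def, Algebra.commutes]
      exact L.smul_mem m h1
    have : a • L.mkQ m = L.mkQ (a • m) := rfl
    rw [this]; exact (Submodule.Quotient.mk_eq_zero L).2 h2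
  have hL' : IsNoetherian C (R ⧸ L') := by
    by_contra h; exact hmax L' h hlt
  let K := LinearMap.range (LinearMap.lsmul C (R ⧸ L) a)
  let φ : (R ⧸ L') →ₗ[C] ((R ⧸ L) ⧸ K) :=
    Submodule.liftQ (L'.restrictScalars C) (K.mkQ ∘ₗ (L.mkQ.restrictScalars C)) (by
      intro x hx
      obtain ⟨y, hy, z, hz, rfl⟩ := Submodule.mem_sup.1 hx
      obtain ⟨r, rfl⟩ := Submodule.mem_span_singleton.1 hz
      rw [LinearMap.mem_ker, LinearMap.comp_apply]
      refine (Submodule.Quotient.mk_eq_zero K).2 ?_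
      refine ⟨L.mkQ r, ?_⟩
      have h1 : L.mkQ y = 0 := by simpa using hy
      have h2 : a • L.mkQ r = L.mkQ (a • r) := rfl
      rw [LinearMap.restrictScalars_apply, map_add, h1, zero_add, LinearMap.lsmul_apply, h2,
        Algebra.smul_def, Algebra.commutes, smul_eq_mul])
  refine isNoetherian_of_surjective φ (LinearMap.range_eq_top.2 ?_)
  intro y
  obtain ⟨y, rfl⟩ := K.mkQ_surjective y
  obtain ⟨y, rfl⟩ := L.mkQ_surjective y
  exact ⟨L'.mkQ y, rfl⟩

theorem aux_noethC {C R : Type*} [CommRing C] [Ring R] [Algebra C R] [Module.Finite C R]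
    [IsNoetherianRing R] (hinj : Function.Injective (algebraMap C R)) : IsNoetherianRing C := by
  have := aux_noeth (C := C) (R := R)
  exact isNoetherian_of_injective (Algebra.linearMap C R) hinj

theorem aux_cHeight {C : Type*} [CommRing C] (p : Ideal C) [p.IsPrime] : p.height ≤ cHeight p := by
  let P : PrimeSpectrum C := ⟨p, inferInstance⟩
  have h : p.height = Order.height P := PrimeSpectrum.height_eq_orderHeight P
  rw [h, Order.height_eq_iSup_last_eq]
  refine iSup₂_le fun l hl => ?_
  refine le_sSup ⟨l.length, rfl, fun i => (l i).asIdeal, ?_, fun i => (l i).2, ?_⟩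
  · intro i j hij
    exact l.strictMono hij
  · change l.last.asIdeal = p
    rw [hl]

theorem aux_ass_step {C : Type*} [CommRing C] [IsNoetherianRing C] {M : Type*} [AddCommGroup M]
    [Module C M] [Module.Finite C M] {p m : Ideal C} [m.IsMaximal] (hp : IsAssociatedPrime p M)
    (hpm : p ≤ m) {x : C} (hx : x ∈ m) (hreg : IsSMulRegular M x) :
    ∃ q : Ideal C, IsAssociatedPrime q (QuotSMulTop x M) ∧ p < q ∧ q ≤ m := by
  have : IsNoetherian C M := isNoetherian_of_isNoetherianRing_of_finite C M
  obtain ⟨hpp, v, hv⟩ := isAssociatedPrime_iff.1 hp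
  have hv' : ∀ c, c ∈ p ↔ c • v = 0 := by
    intro c; rw [hv]; simp [Submodule.mem_colon_singleton]
  let N : Submodule C M :=
    { carrier := {w | ∀ c ∈ p, c • w = 0}
      zero_mem' := fun c _ => smul_zero c
      add_mem' := fun {a b} ha hb c hc => by rw [smul_add, ha c hc, hb c hc, add_zero]
      smul_mem' := fun r a ha c hc => by rw [smul_comm, ha c hc, smul_zero] }
  have hvN : v ∈ N := fun c hc => (hv' c).1 hc
  let π : M →ₗ[C] QuotSMulTop x M := Submodule.mkQ _
  have hπ : ∀ w, π w = 0 ↔ ∃ u, x • u = w := by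
    intro w
    change Submodule.Quotient.mk w = 0 ↔ _
    rw [Submodule.Quotient.mk_eq_zero, Submodule.mem_smul_pointwise_iff_exists]
    simp
  let N' := N.map π
  have hann : Module.annihilator C N' ≤ m := by
    intro s hs
    by_contra hsm
    rw [Module.mem_annihilator] at hs
    obtain ⟨t, y, hy, hty⟩ := Ideal.IsMaximal.exists_inv ‹m.IsMaximal› hsm
    have hNm : N ≤ m • N := by
      intro w hw
      have h1 : s • π w = 0 := by
        have := hs ⟨π w, Submodule.mem_map_of_mem hw⟩
        simpa using congrArg Subtype.val this
      rw [← map_smul] at h1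
      obtain ⟨u, hu⟩ := (hπ _).1 h1
      have huN : u ∈ N := by
        intro c hc
        apply hreg
        change x • c • u = x • 0
        rw [smul_comm, hu, smul_comm, hw c hc, smul_zero, smul_zero]
      have : w = (t * x) • u + y • w := by
        rw [mul_smul, hu, ← mul_smul, ← add_smul, hty, one_smul]
      rw [this]
      exact add_mem (Submodule.smul_mem_smul (m.mul_mem_left t hx) huN)
        (Submodule.smul_mem_smul hy hw)
    obtain ⟨r, hr, hr0⟩ := Submodule.exists_sub_one_mem_and_smul_eq_zero_of_fg_of_le_smul m N
      (IsNoetherian.noetherian N) hNm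
    have hrm : r ∈ m := hpm ((hv' r).2 (hr0 v hvN))
    exact (Ideal.ne_top_iff_one m).1 (Ideal.IsMaximal.ne_top ‹_›)
      (by simpa using sub_mem hrm hr)
  obtain ⟨q, hq, hqm⟩ := Ideal.exists_minimalPrimes_le hann
  have hq' := Module.associatedPrimes.minimalPrimes_annihilator_subset_associatedPrimes C N' hq
  refine ⟨q, IsAssociatedPrime.map_of_injective N'.subtype hq' N'.injective_subtype, ?_, hqm⟩
  have hle : Module.annihilator C N' ≤ q := hq.1.2
  refine lt_of_le_of_ne (fun c hc => hle ?_) ?_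
  · rw [Module.mem_annihilator]
    rintro ⟨_, w, hw, rfl⟩
    ext
    change c • π w = 0
    rw [← map_smul, hw c hc, map_zero]
  · intro he
    have hxq : x ∈ q := hle (by
      rw [Module.mem_annihilator]
      rintro ⟨_, w, hw, rfl⟩
      ext
      change x • π w = 0
      rw [← map_smul, hπ]
      exact ⟨w, rfl⟩)
    rw [← he, hv'] at hxq
    have hv0 : v = 0 := hreg (by simpa using hxq)
    apply hpp.ne_top
    rw [Ideal.eq_top_iff_one, hv', hv0, smul_zero]

theorem aux_chain {C : Type*} [CommRing C] [IsNoetherianRing C] {m : Ideal C} [m.IsMaximal]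
    (rs : List C) : ∀ {M : Type*} [AddCommGroup M]
    [Module C M] [Module.Finite C M] {p : Ideal C} (_ : IsAssociatedPrime p M)
    (_ : p ≤ m) (_ : ∀ x ∈ rs, x ∈ m) (_ : RingTheory.Sequence.IsRegular M rs),
    p.height + rs.length ≤ m.height := by
  induction rs with
  | nil => intro M _ _ _ p hp hpm _ _; simpa using Ideal.height_mono hpm
  | cons x rs ih =>
    intro M _ _ _ p hp hpm hm hreg
    rw [RingTheory.Sequence.isRegular_cons_iff] at hreg
    obtain ⟨q, hq, hpq, hqm⟩ := aux_ass_step hp hpm (hm x (by simp)) hreg.1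
    have h1 := ih hq hqm (fun y hy => hm y (by simp [hy])) hreg.2
    have := hp.isPrime
    have := hq.isPrime
    have h2 := Ideal.height_add_one_le_of_lt_of_isPrime hpq
    calc p.height + (x :: rs).length = (p.height + 1) + rs.length := by
          simp [add_assoc, add_comm (1 : ℕ∞)]
      _ ≤ q.height + rs.length := by gcongr
      _ ≤ _ := h1

theorem aux_ass_min {C : Type*} [CommRing C] [IsNoetherianRing C] {M : Type*} [AddCommGroup M]
    [Module C M] [Module.Finite C M] (hCM : IsMaximalCohenMacaulay C M) {p : Ideal C}
    (hp : IsAssociatedPrime p M) : p ∈ minimalPrimes C := by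
  have hpp := hp.isPrime
  rw [← Ideal.height_eq_zero_iff]
  by_contra h0
  obtain ⟨m, hmax, hpm⟩ := Ideal.exists_le_maximal p hpp.ne_top
  have h1 : 1 ≤ p.height := Order.one_le_iff_ne_zero.2 h0
  have hfin : m.height ≠ ⊤ := Ideal.height_ne_top hmax.ne_top
  have hle : m.height ≤ cGrade m M := by rw [hCM m hmax]; exact aux_cHeight m
  obtain ⟨h, hh⟩ := ENat.ne_top_iff_exists.1 hfin
  have hh1 : 1 ≤ h := by
    have := h1.trans (Ideal.height_mono hpm)
    rw [← hh] at this
    exact_mod_cast this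
  have : cGrade m M ≤ ((h - 1 : ℕ) : ℕ∞) := by
    refine sSup_le ?_
    rintro _ ⟨rs, rfl, hrs, hreg⟩
    have h2 := aux_chain rs hp hpm hrs hreg
    have h3 : (1 : ℕ∞) + rs.length ≤ h := by
      rw [hh]
      exact le_trans (by gcongr) h2
    have h4 : 1 + rs.length ≤ h := by exact_mod_cast h3
    have : rs.length ≤ h - 1 := by omega
    exact_mod_cast this
  have h5 := hle.trans this
  rw [← hh] at h5
  have : h ≤ h - 1 := by exact_mod_cast h5
  omega

theorem aux_zd {C : Type*} [CommRing C] [IsNoetherianRing C] {M : Type*} [AddCommGroup M]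
    [Module C M] (hmin : ∀ p : Ideal C, IsAssociatedPrime p M → p ∈ minimalPrimes C)
    {s : C} (hs : s ∈ nonZeroDivisors C) (x : M) (hx : s • x = 0) : x = 0 := by
  by_contra hx0
  have h : s ∈ ⋃ p ∈ associatedPrimes C M, (p : Set C) := by
    rw [biUnion_associatedPrimes_eq_zero_divisors]
    exact ⟨x, hx0, hx⟩
  simp only [Set.mem_iUnion] at h
  obtain ⟨p, hp, hsp⟩ := h
  have hpm := hmin p hp
  have h2 : p ∈ associatedPrimes C C := by
    apply Module.associatedPrimes.minimalPrimes_annihilator_subset_associatedPrimes C C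
    rwa [Module.annihilator_eq_bot.2 inferInstance]
  have h3 : s ∈ ⋃ p ∈ associatedPrimes C C, (p : Set C) := by
    simp only [Set.mem_iUnion]
    exact ⟨p, h2, hsp⟩
  rw [biUnion_associatedPrimes_eq_compl_nonZeroDivisors] at h3
  exact h3 hs

theorem aux_art {C : Type*} [CommRing C] [IsNoetherianRing C]
    (hmin : ∀ p : Ideal C, IsAssociatedPrime p C → p ∈ minimalPrimes C) :
    IsArtinianRing (Localization (nonZeroDivisors C)) := by
  have hN : IsNoetherianRing (Localization (nonZeroDivisors C)) :=
    IsLocalization.isNoetherianRing (nonZeroDivisors C) _ inferInstance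
  have : Ring.KrullDimLE 0 (Localization (nonZeroDivisors C)) := by
    have key : ∀ I : Ideal (Localization (nonZeroDivisors C)), I.IsPrime →
        I.comap (algebraMap C _) ∈ minimalPrimes C := by
      intro I hI
      have hd := ((IsLocalization.isPrime_iff_isPrime_disjoint (nonZeroDivisors C) _ I).1 hI)
      obtain ⟨hp, hd⟩ := hd
      have hsub : ((I.comap (algebraMap C (Localization (nonZeroDivisors C))) : Ideal C) : Set C) ⊆
          ⋃ p ∈ associatedPrimes C C, (p : Set C) := by
        rw [biUnion_associatedPrimes_eq_compl_nonZeroDivisors]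
        exact hd.subset_compl_left
      obtain ⟨p, hpA, hle⟩ := (Ideal.subset_union_prime_finite (associatedPrimes.finite C C)
        (f := id) 0 0 (fun _ h _ _ => h.1)).1 hsub
      have hpm := hmin p hpA
      have : I.comap (algebraMap C (Localization (nonZeroDivisors C))) = p :=
        le_antisymm hle (hpm.2 ⟨hp, bot_le⟩ hle)
      rw [this]; exact hpm
    refine Ring.KrullDimLE.mk₀ fun I hI => ?_
    obtain ⟨m, hm, hIm⟩ := Ideal.exists_le_maximal I hI.ne_top
    have h1 := key I hI
    have h2 := key m hm.isPrime
    have h3 : I.comap (algebraMap C _) = m.comap (algebraMap C _) :=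
      le_antisymm (Ideal.comap_mono hIm) (h2.2 h1.1 (Ideal.comap_mono hIm))
    have h4 : I = m := by
      rw [← IsLocalization.map_under (nonZeroDivisors C) _ I,
        ← IsLocalization.map_under (nonZeroDivisors C) _ m]
      exact congrArg _ h3
    rw [h4]; exact hm
  exact isArtinianRing_iff_isNoetherianRing_krullDimLE_zero.2 ⟨hN, this⟩

theorem aux_semisimple {A : Type*} [Ring A] [IsArtinianRing A]
    (hprime : ∀ a b : A, (∀ r, a * r * b = 0) → a = 0 ∨ b = 0) : IsSemisimpleRing A := by
  rw [IsArtinianRing.isSemisimpleRing_iff_jacobson]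
  obtain ⟨n, hn⟩ := IsArtinianRing.isNilpotent_jacobson_bot (R := A)
  have key : ∀ k : ℕ, (Ring.jacobson A) ^ (k + 1) = ⊥ → Ring.jacobson A = ⊥ := by
    intro k
    induction k with
    | zero => intro h; rwa [zero_add, Submodule.pow_one] at h
    | succ k ih =>
      intro h
      by_contra hne
      have h1 : (Ring.jacobson A) ^ (k + 1) ≠ ⊥ := fun h => hne (ih h)
      obtain ⟨a, ha, ha0⟩ := Submodule.exists_mem_ne_zero_of_ne_bot h1
      obtain ⟨b, hb, hb0⟩ := Submodule.exists_mem_ne_zero_of_ne_bot hne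
      have hz : ∀ r, a * r * b = 0 := by
        intro r
        have : a * (r * b) ∈ (Ring.jacobson A) ^ (k + 1 + 1) := by
          rw [Submodule.pow_succ]
          exact Ideal.mul_mem_mul ha (Ideal.mul_mem_left _ r hb)
        rw [h] at this
        rw [mul_assoc]; simpa using this
      rcases hprime a b hz with h2 | h2
      · exact ha0 h2
      · exact hb0 h2
  rw [Ideal.jacobson_bot] at hn
  cases n with
  | zero =>
    rw [Submodule.pow_zero, Submodule.one_eq_span, Submodule.zero_eq_bot,
      Submodule.span_singleton_eq_bot] at hn
    rw [eq_bot_iff]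
    intro x _
    rw [Submodule.mem_bot, ← mul_one x, hn, mul_zero]
  | succ n => exact key n hn

theorem aux_prime_max {T : Type*} [Ring T] [IsArtinianRing T] (Q P : TwoSidedIdeal T)
    (hQ : IsPrimeTS Q) (hP : P ≠ ⊤) (hle : Q ≤ P) : P ≤ Q := by
  let A := Q.ringCon.Quotient
  let π : T →+* A := Q.ringCon.mk'
  have hsurj : Function.Surjective π := Q.ringCon.mk'_surjective
  have hπ : ∀ x, π x = 0 ↔ x ∈ Q := by
    intro x
    rw [← map_zero π, TwoSidedIdeal.mem_iff]
    exact RingCon.eq _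
  have : IsArtinianRing A := hsurj.isArtinianRing
  have hss : IsSemisimpleRing A := by
    refine aux_semisimple ?_
    intro a b h
    obtain ⟨a, rfl⟩ := hsurj a
    obtain ⟨b, rfl⟩ := hsurj b
    rw [hπ, hπ]
    refine hQ.2 a b fun r => ?_
    rw [← hπ, map_mul, map_mul]
    exact h _
  let I : Ideal A := (TwoSidedIdeal.asIdeal P).map π
  obtain ⟨L, hL⟩ := exists_isCompl I
  have hI : ∀ y, y ∈ I ↔ ∃ x ∈ P, π x = y := by
    intro y
    rw [Ideal.mem_map_iff_of_surjective π hsurj]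
    simp
  intro x hx
  by_contra hxQ
  have hL0 : L = ⊥ := by
    rw [eq_bot_iff]
    intro l hl
    obtain ⟨t, rfl⟩ := hsurj l
    have : x ∈ Q ∨ t ∈ Q := by
      refine hQ.2 x t fun r => ?_
      rw [← hπ]
      have h1 : π (x * r * t) ∈ I := (hI _).2 ⟨_, P.mul_mem_right _ _ (P.mul_mem_right _ _ hx), rfl⟩
      have h2 : π (x * r * t) ∈ L := by
        rw [map_mul]; exact L.mul_mem_left _ hl
      exact (Submodule.disjoint_def.1 hL.disjoint) _ h1 h2
    rcases this with h | h
    · exact absurd h hxQ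
    · exact (hπ t).2 h
  rw [hL0] at hL
  have hItop : I = ⊤ := by simpa using hL.codisjoint.eq_top
  obtain ⟨y, hy, hy1⟩ := (hI 1).1 (by rw [hItop]; trivial)
  apply hP
  have h1 : 1 - y ∈ Q := by rw [← hπ, map_sub, hy1, map_one, sub_self]
  have : (1 : T) ∈ P := by simpa using P.add_mem (hle h1) hy
  exact P.one_mem_iff.1 this

universe u


theorem aux_loc {C : Type u} {R : Type u} [CommRing C] [Ring R] [Algebra C R] [Module.Finite C R]
    (S : Submonoid C) [IsArtinianRing (Localization S)]
    (hS : ∀ s ∈ S, ∀ x : R, s • x = 0 → x = 0) :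
    ∃ (T : Type u) (_ : Ring T) (f : R →+* T), IsArtinianRing T ∧ Function.Injective f ∧
      (∀ s ∈ S, IsUnit (f (algebraMap C R s))) ∧
      ∀ q : T, ∃ s ∈ S, ∃ a : R, q * f (algebraMap C R s) = f a := by
  let f : R →+* LocalizedModule S R :=
    { toFun := fun r => LocalizedModule.mk r 1
      map_one' := (OreLocalization.one_def (S := S)).symm
      map_zero' := LocalizedModule.zero_mk 1
      map_add' := fun a b => by rw [LocalizedModule.mk_add_mk]; simp
      map_mul' := fun a b => by rw [LocalizedModule.mk_mul_mk]; simp }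
  have hf : ∀ r, f r = LocalizedModule.mk r 1 := fun r => rfl
  refine ⟨LocalizedModule S R, inferInstance, f, ?_, ?_, ?_, ?_⟩
  · have : IsScalarTower (Localization S) (LocalizedModule S R) (LocalizedModule S R) := by
      refine ⟨fun x y z => ?_⟩
      induction x using Localization.induction_on with
      | H x =>
        induction y using LocalizedModule.induction_on with
        | h a s =>
          induction z using LocalizedModule.induction_on with
          | h b t =>
            rw [smul_eq_mul, smul_eq_mul, LocalizedModule.mk_smul_mk, LocalizedModule.mk_mul_mk,
              LocalizedModule.mk_mul_mk, LocalizedModule.mk_smul_mk, smul_mul_assoc, mul_assoc]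
    exact IsArtinianRing.of_finite (Localization S) (LocalizedModule S R)
  · rw [injective_iff_map_eq_zero]
    intro a ha
    rw [hf, ← LocalizedModule.zero_mk 1, LocalizedModule.mk_eq] at ha
    obtain ⟨u, hu⟩ := ha
    refine hS u u.2 a ?_
    simpa [Submonoid.smul_def] using hu
  · intro s hs
    have h1 : f (algebraMap C R s) * LocalizedModule.mk 1 ⟨s, hs⟩ = 1 := by
      rw [hf, LocalizedModule.mk_mul_mk, OreLocalization.one_def]
      refine LocalizedModule.mk_eq.2 ⟨1, ?_⟩
      simp [Submonoid.smul_def, Algebra.smul_def]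
    have h2 : LocalizedModule.mk 1 ⟨s, hs⟩ * f (algebraMap C R s) = 1 := by
      rw [hf, LocalizedModule.mk_mul_mk, OreLocalization.one_def]
      refine LocalizedModule.mk_eq.2 ⟨1, ?_⟩
      simp [Submonoid.smul_def, Algebra.smul_def]
    exact ⟨⟨_, _, h1, h2⟩, rfl⟩
  · intro q
    induction q using LocalizedModule.induction_on with
    | h a s =>
      refine ⟨s, s.2, a, ?_⟩
      rw [hf, hf, LocalizedModule.mk_mul_mk]
      refine LocalizedModule.mk_eq.2 ⟨1, ?_⟩
      simp [Submonoid.smul_def, Algebra.smul_def, Algebra.commutes]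

section
variable {C R T : Type u} [CommRing C] [Ring R] [Algebra C R] [Ring T] (S : Submonoid C)
  (f : R →+* T) (hu : ∀ s ∈ S, IsUnit (f (algebraMap C R s)))
  (hfr : ∀ q : T, ∃ s ∈ S, ∃ a : R, q * f (algebraMap C R s) = f a)

include hu hfr in
theorem aux_central (c : C) (q : T) : f (algebraMap C R c) * q = q * f (algebraMap C R c) := by
  obtain ⟨s, hs, a, h⟩ := hfr q
  apply (hu s hs).mul_right_cancel
  rw [mul_assoc, h, ← map_mul, Algebra.commutes, map_mul, ← h, mul_assoc, mul_assoc, ← map_mul f,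
    ← map_mul f, ← Algebra.commutes]

include hu hfr in
theorem aux_ext (Q : TwoSidedIdeal R) : ∃ E : TwoSidedIdeal T, ∀ q, q ∈ E ↔
    ∃ s ∈ S, ∃ a ∈ Q, q * f (algebraMap C R s) = f a := by
  have hc := aux_central S f hu hfr
  refine ⟨TwoSidedIdeal.mk' {q | ∃ s ∈ S, ∃ a ∈ Q, q * f (algebraMap C R s) = f a}
    ?_ ?_ ?_ ?_ ?_, fun q => ?_⟩
  · exact ⟨1, S.one_mem, 0, Q.zero_mem, by simp⟩
  · rintro x y ⟨s, hs, a, ha, h⟩ ⟨t, ht, b, hb, h'⟩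
    refine ⟨s * t, S.mul_mem hs ht, a * algebraMap C R t + b * algebraMap C R s,
      Q.add_mem (Q.mul_mem_right _ _ ha) (Q.mul_mem_right _ _ hb), ?_⟩
    rw [map_add, map_mul f a, map_mul f b, ← h, ← h', map_mul, map_mul, add_mul, mul_assoc x,
      mul_assoc y, hc s]
  · rintro x ⟨s, hs, a, ha, h⟩
    exact ⟨s, hs, -a, Q.neg_mem ha, by rw [map_neg, ← h, neg_mul]⟩
  · rintro x y ⟨s, hs, a, ha, h⟩
    obtain ⟨t, ht, b, h'⟩ := hfr x
    refine ⟨s * t, S.mul_mem hs ht, b * a, Q.mul_mem_left _ _ ha, ?_⟩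
    rw [map_mul f b a, ← h', mul_assoc x (f _), hc t, ← h]
    simp [mul_assoc]
  · rintro x y ⟨s, hs, a, ha, h⟩
    obtain ⟨t, ht, b, h'⟩ := hfr y
    refine ⟨t * s, S.mul_mem ht hs, a * b, Q.mul_mem_right _ _ ha, ?_⟩
    rw [map_mul f a b, ← h', ← h, mul_assoc x (f _), hc s]
    simp [mul_assoc]
  · rw [TwoSidedIdeal.mem_mk']; rfl

include hu hfr in
theorem aux_le (hinj : Function.Injective f) [IsArtinianRing T]
    (P Q : TwoSidedIdeal R) (hP : IsPrimeTS P) (hQ : IsPrimeTS Q)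
    (hPS : ∀ s ∈ S, algebraMap C R s ∉ P) (hle : Q ≤ P) : Q = P := by
  have hQS : ∀ s ∈ S, algebraMap C R s ∉ Q := fun s hs h => hPS s hs (hle h)
  have contr : ∀ {I : TwoSidedIdeal R}, IsPrimeTS I → (∀ s ∈ S, algebraMap C R s ∉ I) →
      ∀ x, (∃ s ∈ S, ∃ a ∈ I, f x * f (algebraMap C R s) = f a) → x ∈ I := by
    rintro I hI hIS x ⟨s, hs, a, ha, h⟩
    rw [← map_mul] at h
    have h := hinj h
    refine (hI.2 x (algebraMap C R s) fun r => ?_).resolve_right (hIS s hs)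
    rw [mul_assoc, ← Algebra.commutes, ← mul_assoc, h]
    exact I.mul_mem_right _ _ ha
  have hne : ∀ {I : TwoSidedIdeal R}, I ≠ ⊤ → (1 : R) ∉ I := fun h h1 => h (TwoSidedIdeal.one_mem_iff _ |>.1 h1)
  obtain ⟨E, hE⟩ := aux_ext S f hu hfr Q
  obtain ⟨F, hF⟩ := aux_ext S f hu hfr P
  have hEp : IsPrimeTS E := by
    constructor
    · intro h
      have : (1 : T) ∈ E := by rw [h]; trivial
      rw [hE] at this
      exact hne hQ.1 (contr hQ hQS 1 (by rwa [map_one]))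
    · intro x y hxy
      obtain ⟨s, hs, a, h⟩ := hfr x
      obtain ⟨t, ht, b, h'⟩ := hfr y
      have : a ∈ Q ∨ b ∈ Q := by
        refine hQ.2 a b fun r => contr hQ hQS _ ?_
        rw [← hE, map_mul, map_mul, ← h, ← h', ← mul_assoc]
        refine E.mul_mem_right _ _ ?_
        rw [mul_assoc x]
        exact hxy _
      rcases this with h1 | h1
      · left; rw [hE]; exact ⟨s, hs, a, h1, h⟩
      · right; rw [hE]; exact ⟨t, ht, b, h1, h'⟩
  have hFt : F ≠ ⊤ := by
    intro h
    have : (1 : T) ∈ F := by rw [h]; trivial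
    rw [hF] at this
    exact hne hP.1 (contr hP hPS 1 (by rwa [map_one]))
  have hEF : E ≤ F := by
    intro x hx
    rw [hE] at hx
    obtain ⟨s, hs, a, ha, h⟩ := hx
    exact (hF x).2 ⟨s, hs, a, hle ha, h⟩
  have hFE := aux_prime_max E F hEp hFt hEF
  refine le_antisymm hle fun x hx => contr hQ hQS x ?_
  rw [← hE]
  apply hFE
  rw [hF]
  exact ⟨1, S.one_mem, x, hx, by simp⟩

end

theorem aux_main {C R : Type u} [CommRing C] [Ring R] [Algebra C R] [Module.Finite C R]
    [IsNoetherianRing R] (hinj : Function.Injective (algebraMap C R))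
    (hCM : IsMaximalCohenMacaulay C R) :
    (∀ P : TwoSidedIdeal R, IsPrimeTS P →
        (∃ a : R, a ≠ 0 ∧ ∀ x : R, x ∈ P ↔ ∀ r : R, a * r * x = 0) →
        ∀ Q : TwoSidedIdeal R, IsPrimeTS Q → Q ≤ P → Q = P) ∧
    ∃ (Q : Type u) (instQ : Ring Q),
      letI := instQ
      ∃ f : R →+* Q, IsArtinianRing Q ∧ Function.Injective f ∧
        (∀ s : R, IsRegularElem s → IsUnit (f s)) ∧
        ∀ q : Q, ∃ a s : R, IsRegularElem s ∧ q * f s = f a := by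
  have hN : IsNoetherianRing C := aux_noethC hinj
  have hmin : ∀ p : Ideal C, IsAssociatedPrime p R → p ∈ minimalPrimes C :=
    fun p hp => aux_ass_min hCM hp
  have hminC : ∀ p : Ideal C, IsAssociatedPrime p C → p ∈ minimalPrimes C :=
    fun p hp => hmin p (hp.map_of_injective (Algebra.linearMap C R) hinj)
  have hA := aux_art hminC
  have hS : ∀ s ∈ nonZeroDivisors C, ∀ x : R, s • x = 0 → x = 0 :=
    fun s hs x hx => aux_zd hmin hs x hx
  obtain ⟨T, instT, f, hT, hf, hu, hfr⟩ := aux_loc (R := R) (nonZeroDivisors C) hS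
  constructor
  · rintro P hP ⟨a, ha, haP⟩ Q hQ hle
    refine aux_le (nonZeroDivisors C) f hu hfr hf P Q hP hQ ?_ hle
    intro s hs hsP
    apply ha
    apply hS s hs
    have := (haP _).1 hsP 1
    rwa [mul_one, ← Algebra.commutes, ← Algebra.smul_def] at this
  · refine ⟨T, instT, f, hT, hf, ?_, ?_⟩
    · intro s hs
      apply IsArtinianRing.isUnit_of_mem_nonZeroDivisors
      rw [mem_nonZeroDivisors_iff]
      constructor
      · intro q hq
        obtain ⟨t, ht, a, h⟩ := hfr q
        have h0 : a = 0 := hs.1 a (hf (by rw [map_mul, ← h, ← mul_assoc, hq, zero_mul, map_zero]))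
        apply (hu t ht).mul_right_cancel
        rw [h, h0, map_zero, zero_mul]
      · intro q hq
        obtain ⟨t, ht, a, h⟩ := hfr q
        have h0 : a = 0 := hs.2 a (hf (by
          rw [map_mul, ← h, mul_assoc, aux_central _ f hu hfr, ← mul_assoc, hq, zero_mul, map_zero]))
        apply (hu t ht).mul_right_cancel
        rw [h, h0, map_zero, zero_mul]
    · intro q
      obtain ⟨t, ht, a, h⟩ := hfr q
      refine ⟨a, algebraMap C R t, ⟨fun x hx => hS t ht x ?_, fun x hx => hS t ht x ?_⟩, h⟩
      · rwa [Algebra.smul_def]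
      · rwa [Algebra.smul_def, Algebra.commutes]

/-- Let `R` be a noetherian ring which is a finite module over its centre `Z(R)` and
which is `Z(R)`-Macaulay.  Then every annihilator prime of `R` (as a right module over
itself) is a minimal prime, and consequently `R` has an artinian classical quotient
ring. -/
theorem annihilator_primes_minimal_and_artinian_quotient (R : Type u) [Ring R]
    [IsNoetherianRing R] [Module.Finite (Subring.center R) R]
    (hCM : IsMaximalCohenMacaulay (Subring.center R) R) :
    (∀ P : TwoSidedIdeal R, IsPrimeTS P →
        (∃ a : R, a ≠ 0 ∧ ∀ x : R, x ∈ P ↔ ∀ r : R, a * r * x = 0) →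
        ∀ Q : TwoSidedIdeal R, IsPrimeTS Q → Q ≤ P → Q = P) ∧
    ∃ (Q : Type u) (instQ : Ring Q),
      letI := instQ
      ∃ f : R →+* Q, IsArtinianRing Q ∧ Function.Injective f ∧
        (∀ s : R, IsRegularElem s → IsUnit (f s)) ∧
        ∀ q : Q, ∃ a s : R, IsRegularElem s ∧ q * f s = f a := by
  exact aux_main (C := Subring.center R) Subtype.val_injective hCM
end

section
/- Let R be a prime noetherian ring finitely generated as a module over its center Z(R), with finite global dimension, which is Z(R)-Macaulay, and which is Azumaya in height one (the non-Azumaya locus in Maxspec(Z(R)) has codimension at least 2). Then the Azumaya locus of R equals the smooth locus of Z(R): for a maximal ideal m of Z(R), R_m is Azumaya over Z(R)_m if and only if Z(R)_m has finite global dimension. -/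
universe u

open CategoryTheory in
/-- The `i`-th Ext group `Ext^i_S(M, N)` of (left) modules over an arbitrary ring. -/
noncomputable def ExtGroup (S : Type u) [Ring S] (M N : Type u) [AddCommGroup M] [Module S M]
    [AddCommGroup N] [Module S N] (i : ℕ) : Type _ :=
  letI : HasDerivedCategory (ModuleCat S) := HasDerivedCategory.standard _
  letI : HasExt (ModuleCat S) := hasExt_of_hasDerivedCategory _
  Abelian.Ext (ModuleCat.of S M) (ModuleCat.of S N) i

/-- The homological grade `j_S(M) = min { i | Ext^i_S(M, S) ≠ 0 }` (valued `∞` if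
no such `i` exists). -/
noncomputable def homGrade (S : Type u) [Ring S] (M : Type u) [AddCommGroup M]
    [Module S M] : ℕ∞ :=
  sInf {n : ℕ∞ | ∃ i : ℕ, n = i ∧ ¬ Subsingleton (ExtGroup S M S i)}

/-- The left ideal of `Rᵐᵒᵖ` corresponding to a two-sided ideal of `R`; the quotient
`Rᵐᵒᵖ ⧸ tsOpIdeal P` realises `R/P` as a right `R`-module. -/
def tsOpIdeal {R : Type*} [Ring R] (P : TwoSidedIdeal R) : Ideal Rᵐᵒᵖ where
  carrier := {x | x.unop ∈ P}
  add_mem' ha hb := by simpa using P.add_mem ha hb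
  zero_mem' := by simpa using P.zero_mem
  smul_mem' r x hx := by
    show (r * x).unop ∈ P
    rw [MulOpposite.unop_mul]
    exact P.mul_mem_right _ _ hx

/-- A ring has finite (left) global dimension: there is an `n` such that all Ext groups
vanish in degrees above `n`. -/
def HasFiniteGlobalDimension (S : Type u) [Ring S] : Prop :=
  ∃ n : ℕ, ∀ (M N : Type u) [AddCommGroup M] [Module S M] [AddCommGroup N] [Module S N],
    ∀ i : ℕ, n < i → Subsingleton (ExtGroup S M N i)

open TensorProduct in
/-- The canonical map `R ⊗_C Rᵒᵖ → End_C(R)`, `a ⊗ b ↦ (x ↦ a * x * b)`. -/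
noncomputable def azuMap (C R : Type*) [CommRing C] [Ring R] [Algebra C R] :
    R ⊗[C] Rᵐᵒᵖ →ₗ[C] (R →ₗ[C] R) :=
  TensorProduct.lift <| LinearMap.mk₂ C
    (fun a b => (LinearMap.mulLeft C a).comp (LinearMap.mulRight C b.unop))
    (by intro a a' b; ext x; simp [add_mul])
    (by intro c a b; ext x; simp [smul_mul_assoc])
    (by intro a b b'; ext x; simp [mul_add])
    (by intro c a b; ext x; simp [mul_smul_comm])

/-- `R` is an Azumaya algebra over the commutative ring `C`: it is a faithful
finitely generated projective `C`-module and the enveloping map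
`R ⊗_C Rᵒᵖ → End_C(R)` is bijective. -/
def IsAzumayaAlg (C R : Type*) [CommRing C] [Ring R] [Algebra C R] : Prop :=
  Module.Finite C R ∧ Module.Projective C R ∧ FaithfulSMul C R ∧
    Function.Bijective (azuMap C R)

section
variable {A : Type*} [CommRing A]

lemma faz_formanek1 (M : Type*) [AddCommGroup M] [Module A M] [Module.Finite A M]
    (h : ∀ a : A, (∃ x : M, a • x ≠ 0) →
      IsNoetherian A (M ⧸ (LinearMap.range (LinearMap.lsmul A M a)))) : IsNoetherian A M := by
  classical
  obtain ⟨s, hs⟩ := Module.Finite.fg_top (R := A) (M := M)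
  have key : ∀ (N : Submodule A M) (a : A), (∀ x : M, a • x ∈ N) ↔ ∀ x ∈ s, a • x ∈ N := by
    intro N a
    refine ⟨fun h x _ => h x, fun h x => ?_⟩
    have : (⊤ : Submodule A M) ≤ N.comap (LinearMap.lsmul A M a) := by
      rw [← hs, Submodule.span_le]; exact fun x hx => h x hx
    exact this (Submodule.mem_top (x := x))
  let T : Set (Submodule A M) := {N | ∀ a : A, (∀ x : M, a • x ∈ N) → ∀ x : M, a • x = 0}
  obtain ⟨N, hN⟩ : ∃ N, Maximal (· ∈ T) N := by
    apply zorn_le_nonempty₀ T ?_ ⊥ ?_ |>.imp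
    · exact fun a h => h.2
    · intro c hcT hc N0 hN0
      refine ⟨sSup c, ?_, fun z hz => le_sSup hz⟩
      intro a ha
      rw [key] at ha
      have : ∀ t : Finset M, (∀ x ∈ t, a • x ∈ sSup c) → ∃ N ∈ c, ∀ x ∈ t, a • x ∈ N := by
        intro t
        induction t using Finset.induction_on with
        | empty => intro _; exact ⟨N0, hN0, by simp⟩
        | insert y t hy ih =>
          intro ht
          obtain ⟨N1, h1, h1'⟩ := ih (fun x hx => ht x (Finset.mem_insert_of_mem hx))
          obtain ⟨N2, h2, h2'⟩ := (Submodule.mem_sSup_of_directed ⟨N0, hN0⟩ hc.directedOn).1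
            (ht y (Finset.mem_insert_self _ _))
          rcases hc.total h1 h2 with h | h
          · refine ⟨N2, h2, ?_⟩
            intro x hx
            rcases Finset.mem_insert.1 hx with rfl | hx
            · exact h2'
            · exact h (h1' x hx)
          · refine ⟨N1, h1, ?_⟩
            intro x hx
            rcases Finset.mem_insert.1 hx with rfl | hx
            · exact h h2'
            · exact (h1' x hx)
      obtain ⟨N1, h1, h2⟩ := this s ha
      exact hcT h1 a ((key N1 a).2 h2)
    · intro a ha x; simpa using ha x
  have big : ∀ N' : Submodule A M, N < N' → N'.FG := by
    intro N' hlt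
    have : N' ∉ T := fun h => hlt.not_ge (hN.2 h hlt.le)
    simp only [T, Set.mem_ofPred_eq, not_forall] at this
    obtain ⟨a, ha, hx⟩ := this
    have := h a hx
    set Q := LinearMap.range (LinearMap.lsmul A M a)
    have hQ : Q ≤ N' := by rintro _ ⟨x, rfl⟩; exact ha x
    apply Submodule.fg_of_fg_map_of_fg_inf_ker Q.mkQ
    · exact IsNoetherian.noetherian _
    · rw [Submodule.ker_mkQ, inf_eq_right.2 hQ]
      exact Module.Finite.fg_top.map (LinearMap.lsmul A M a) |> fun h => by
        rwa [← LinearMap.range_eq_map] at h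
  have hq : IsNoetherian A (M ⧸ N) := by
    constructor
    intro K
    by_cases hK : N < K.comap N.mkQ
    · have := (big _ hK).map N.mkQ
      rwa [Submodule.map_comap_eq_of_surjective (Submodule.mkQ_surjective N)] at this
    · have h1 : N ≤ K.comap N.mkQ := by
        intro x hx; simp [(Submodule.Quotient.mk_eq_zero N).2 hx]
      have h2 : K.comap N.mkQ = N := (eq_of_le_of_not_lt h1 hK).symm
      have : K = ⊥ := by
        rw [← Submodule.map_comap_eq_of_surjective (Submodule.mkQ_surjective N) K, h2]
        simp
      rw [this]; exact Submodule.fg_bot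
  -- now A/ann noetherian
  let φ : A →ₗ[A] (s → M ⧸ N) := LinearMap.pi fun x => LinearMap.toSpanSingleton A _ (N.mkQ x.1)
  have hker : ∀ a, φ a = 0 → ∀ x : M, a • x = 0 := by
    intro a ha
    apply hN.1 a
    rw [key]
    intro x hx
    have := congrFun ha ⟨x, hx⟩
    simp only [φ, LinearMap.pi_apply, LinearMap.toSpanSingleton_apply, Pi.zero_apply] at this
    rw [← map_smul] at this
    exact (Submodule.Quotient.mk_eq_zero N).1 this
  have hr : IsNoetherian A (A ⧸ LinearMap.ker φ) :=
    isNoetherian_of_linearEquiv (φ.quotKerEquivRange).symm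
  -- M is a quotient of (A/ker)^s
  let ψ : (s → A ⧸ LinearMap.ker φ) →ₗ[A] M :=
    ∑ x : s, ((LinearMap.ker φ).liftQ (LinearMap.toSpanSingleton A M x.1)
      (fun a ha => by simpa using hker a ha x.1)) ∘ₗ LinearMap.proj x
  refine isNoetherian_of_surjective (f := ψ) ?_
  rw [eq_top_iff, ← hs, Submodule.span_le]
  intro x hx
  refine ⟨Pi.single ⟨x, hx⟩ ((LinearMap.ker φ).mkQ 1), ?_⟩
  simp only [ψ, LinearMap.sum_apply, LinearMap.comp_apply, LinearMap.proj_apply]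
  rw [Finset.sum_eq_single ⟨x, hx⟩]
  · rw [Pi.single_eq_same]; erw [Submodule.liftQ_apply]; simp
  · intro b _ hb; rw [Pi.single_eq_of_ne hb]; simp
  · simp

lemma faz_noeth {R : Type*} [Ring R] [Algebra A R] [Module.Finite A R] [IsNoetherianRing R]
    [FaithfulSMul A R] : IsNoetherianRing A := by
  have : ∀ J : Submodule R R, IsNoetherian A (R ⧸ J) := by
    intro J
    induction J using IsWellFounded.induction (· > · : Submodule R R → Submodule R R → Prop) with
    | _ J ih =>
    apply faz_formanek1
    intro a ⟨x, hx⟩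
    let J' : Submodule R R := J ⊔ LinearMap.range (LinearMap.toSpanSingleton R R (algebraMap A R a))
    have hJ : J < J' := by
      refine lt_of_le_of_ne le_sup_left fun h => hx ?_
      induction x using Submodule.Quotient.induction_on with | _ x =>
      rw [← Submodule.Quotient.mk_smul, Submodule.Quotient.mk_eq_zero, h]
      refine Submodule.mem_sup_right ⟨x, ?_⟩
      simp [Algebra.smul_def, Algebra.commutes]
    have := ih J' hJ
    let f : (R ⧸ J') →ₗ[A] ((R ⧸ J) ⧸ (LinearMap.range (LinearMap.lsmul A (R ⧸ J) a))) :=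
      { toFun := Quotient.lift (s := J'.quotientRel) (fun r => Submodule.Quotient.mk (Submodule.Quotient.mk r)) (by
          intro r s hrs
          have h1 : r - s ∈ J' := by rwa [← Submodule.quotientRel_def]
          obtain ⟨y, hy, z, ⟨w, rfl⟩, hz⟩ := Submodule.mem_sup.1 h1
          rw [← sub_eq_zero, ← Submodule.Quotient.mk_sub, ← Submodule.Quotient.mk_sub, ← hz,
            Submodule.Quotient.mk_eq_zero, Submodule.Quotient.mk_add,
            (Submodule.Quotient.mk_eq_zero J).2 hy, zero_add]
          refine ⟨Submodule.Quotient.mk w, ?_⟩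
          simp only [LinearMap.lsmul_apply, ← Submodule.Quotient.mk_smul]
          simp [Algebra.smul_def, Algebra.commutes])
        map_add' := by
          intro x y
          induction x using Submodule.Quotient.induction_on
          induction y using Submodule.Quotient.induction_on
          rfl
        map_smul' := by
          intro c x
          induction x using Submodule.Quotient.induction_on
          rfl }
    refine isNoetherian_of_surjective (f := f) ?_
    rw [LinearMap.range_eq_top]
    intro y
    induction y using Submodule.Quotient.induction_on with | _ y =>
    induction y using Submodule.Quotient.induction_on with | _ y =>
    exact ⟨Submodule.Quotient.mk y, rfl⟩
  have h0 := this ⊥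
  have : IsNoetherian A R := isNoetherian_of_linearEquiv
    ((Submodule.quotEquivOfEqBot (⊥ : Submodule R R) rfl).restrictScalars A)
  exact isNoetherian_of_injective (Algebra.linearMap A R) (FaithfulSMul.algebraMap_injective A R)
end
section
open CategoryTheory IsLocalRing RingTheory.Sequence

/-- unbundled projective dimension bound -/
abbrev fazPD (A : Type u) [Ring A] (M : Type u) [AddCommGroup M] [Module A M] (n : ℕ) : Prop :=
  HasProjectiveDimensionLT (ModuleCat.of A M) n

lemma fazPD.congr {A : Type u} [Ring A] {M N : Type u} [AddCommGroup M] [Module A M]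
    [AddCommGroup N] [Module A N] {n : ℕ} (e : M ≃ₗ[A] N) (h : fazPD A M n) : fazPD A N n :=
  hasProjectiveDimensionLT_of_iso e.toModuleIso n

lemma fazPD.mono {A : Type u} [Ring A] {M : Type u} [AddCommGroup M] [Module A M]
    {n k : ℕ} (hk : n ≤ k) (h : fazPD A M n) : fazPD A M k :=
  hasProjectiveDimensionLT_of_ge _ n k hk

lemma fazPD.mid {A : Type u} [Ring A] {M N : Type u} [AddCommGroup M] [Module A M]
    [AddCommGroup N] [Module A N] {n : ℕ} (f : M →ₗ[A] N) (hf : Function.Injective f)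
    (h : fazPD A M n) (h' : fazPD A (N ⧸ LinearMap.range f) n) : fazPD A N n := by
  have hS := LinearMap.shortExact_shortComplexKer (Submodule.mkQ_surjective (LinearMap.range f))
  exact hS.hasProjectiveDimensionLT_X₂ n (fazPD.congr
    ((LinearEquiv.ofInjective f hf).trans (LinearEquiv.ofEq _ _ (Submodule.ker_mkQ _).symm)) h) h'

lemma fazPD.left {A : Type u} [Ring A] {M N : Type u} [AddCommGroup M] [Module A M]
    [AddCommGroup N] [Module A N] {n : ℕ} (f : M →ₗ[A] N) (hf : Function.Injective f)
    (h : fazPD A N n) (h' : fazPD A (N ⧸ LinearMap.range f) (n+1)) : fazPD A M n := by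
  have hS := LinearMap.shortExact_shortComplexKer (Submodule.mkQ_surjective (LinearMap.range f))
  exact fazPD.congr
    ((LinearEquiv.ofInjective f hf).trans (LinearEquiv.ofEq _ _ (Submodule.ker_mkQ _).symm)).symm
    (hS.hasProjectiveDimensionLT_X₁ n h h')

variable {A : Type u} [CommRing A] [IsNoetherianRing A] [IsLocalRing A]

lemma faz_depth0 (M : Type u) [AddCommGroup M] [Module A M] [Module.Finite A M]
    (h : ∀ x ∈ maximalIdeal A, ¬ IsSMulRegular M x) :
    ∃ f : (A ⧸ maximalIdeal A) →ₗ[A] M, Function.Injective f := by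
  have h1 : ¬ Subsingleton ((A ⧸ maximalIdeal A) →ₗ[A] M) := by
    rw [IsSMulRegular.subsingleton_linearMap_iff]
    rintro ⟨r, hr, hr'⟩
    rw [Ideal.annihilator_quotient] at hr
    exact h r hr hr'
  rw [not_subsingleton_iff_nontrivial] at h1
  obtain ⟨f, hf⟩ := exists_ne (0 : (A ⧸ maximalIdeal A) →ₗ[A] M)
  refine ⟨f, ?_⟩
  have hs : IsSimpleModule A (A ⧸ maximalIdeal A) := by
    rw [isSimpleModule_iff_isCoatom]
    exact Ideal.isMaximal_def.1 inferInstance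
  exact (LinearMap.injective_or_eq_zero f).resolve_right hf

lemma faz_maxreg (d : ℕ) (hd : ringKrullDim A = d) :
    ∃ rs : List A, rs.length ≤ d ∧ (∀ x ∈ rs, x ∈ maximalIdeal A) ∧ IsWeaklyRegular A rs ∧
      ∀ x ∈ maximalIdeal A, ¬ IsSMulRegular (A ⧸ Ideal.ofList rs • (⊤ : Submodule A A)) x := by
  classical
  let P : ℕ → Prop := fun n => ∃ rs : List A, rs.length = n ∧ (∀ x ∈ rs, x ∈ maximalIdeal A) ∧
    IsWeaklyRegular A rs
  have hb : ∀ n, P n → n ≤ d := by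
    rintro n ⟨rs, rfl, hm, hw⟩
    have hle : Ideal.ofList rs ≤ maximalIdeal A := Ideal.span_le.2 hm
    have hreg : IsRegular A rs := ⟨hw, by
      rw [smul_eq_mul, Ideal.mul_top]
      exact fun h => (maximalIdeal.isMaximal A).ne_top (top_le_iff.1 (h ▸ hle))⟩
    have := ringKrullDim_add_length_eq_ringKrullDim_of_isRegular rs hreg
    have hnt : Nontrivial (A ⧸ Ideal.ofList rs) := Ideal.Quotient.nontrivial_iff.2
      (ne_top_of_le_ne_top (maximalIdeal.isMaximal A).ne_top hle)
    have h0 := ringKrullDim_nonneg_of_nontrivial (R := A ⧸ Ideal.ofList rs)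
    have : ((rs.length : ℕ) : WithBot ℕ∞) ≤ (d : ℕ) := by
      rw [← hd, ← this]
      exact le_add_of_nonneg_left h0
    exact_mod_cast this
  have h0 : P 0 := ⟨[], rfl, by simp, by simp⟩
  obtain ⟨rs, hl, hm, hw⟩ := Nat.findGreatest_spec (P := P) (n := d) (Nat.zero_le _) h0
  refine ⟨rs, hl ▸ Nat.findGreatest_le d, hm, hw, fun x hx hreg => ?_⟩
  have hP : P (rs.length + 1) := ⟨rs ++ [x], by simp, by
    intro y hy
    rcases List.mem_append.1 hy with h | h
    · exact hm y h
    · simp at h; exact h ▸ hx, by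
    rw [isWeaklyRegular_append_iff]
    refine ⟨hw, ?_⟩
    rw [isWeaklyRegular_singleton_iff]
    exact hreg⟩
  have := Nat.le_findGreatest (P := P) (hb _ hP) hP
  omega

lemma faz_bound (d : ℕ) (hd : ringKrullDim A = d)
    (h : ∃ n : ℕ, ∀ (N : Type u) [AddCommGroup N] [Module A N], Module.Finite A N → fazPD A N n) :
    ∀ (N : Type u) [AddCommGroup N] [Module A N], Module.Finite A N → fazPD A N (d+1) := by
  classical
  obtain ⟨g, hg, hmin⟩ : ∃ n : ℕ, (∀ (N : Type u) [AddCommGroup N] [Module A N],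
      Module.Finite A N → fazPD A N n) ∧ ∀ k < n, ¬ (∀ (N : Type u) [AddCommGroup N] [Module A N],
      Module.Finite A N → fazPD A N k) :=
    ⟨Nat.find h, Nat.find_spec h, fun k hk => Nat.find_min h hk⟩
  rcases g with _ | g
  · intro N _ _ hN
    exact (hg N hN).mono (by omega)
  have h1 := hmin g (by omega)
  push Not at h1
  obtain ⟨N, _, _, hN, hNg⟩ := h1
  let T : Set (Submodule A N) := {L | ¬ fazPD A (N ⧸ L) g}
  have hT : T.Nonempty := ⟨⊥, fun hh => hNg (hh.congr (Submodule.quotEquivOfEqBot ⊥ rfl))⟩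
  obtain ⟨L, hL, hLmax⟩ := WellFounded.has_min
    (IsWellFounded.wf (r := (· > · : Submodule A N → Submodule A N → Prop))) T hT
  have hno : ∀ x ∈ maximalIdeal A, ¬ IsSMulRegular (N ⧸ L) x := by
    intro x hx hreg
    have e := ModuleCat.projectiveDimension_quotSMulTop_eq_succ_of_isSMulRegular
      (ModuleCat.of A (N ⧸ L)) x hreg hx
    have h2 := (projectiveDimension_ge_iff (ModuleCat.of A (N ⧸ L)) g).2 hL
    have h3 : ((g + 1 : ℕ) : WithBot ℕ∞) ≤
        projectiveDimension (ModuleCat.of A (QuotSMulTop x (N ⧸ L))) := by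
      erw [e]
      push_cast
      gcongr
    rw [projectiveDimension_ge_iff] at h3
    exact h3 (hg _ inferInstance)
  obtain ⟨f, hf⟩ := faz_depth0 (N ⧸ L) hno
  have hk : ¬ fazPD A (A ⧸ maximalIdeal A) g := by
    intro hk
    apply hL
    refine fazPD.mid f hf hk ?_
    let L' := (LinearMap.range f).comap L.mkQ
    have hlt : L < L' := by
      have hle : L ≤ L' := fun x hx => by
        simp only [L', Submodule.mem_comap]
        rw [Submodule.mkQ_apply, (Submodule.Quotient.mk_eq_zero L).2 hx]
        exact Submodule.zero_mem _
      refine lt_of_le_of_ne hle fun heq => ?_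
      have : LinearMap.range f = ⊥ := by
        rw [← Submodule.map_comap_eq_of_surjective (Submodule.mkQ_surjective L)
          (LinearMap.range f)]
        change Submodule.map _ L' = _
        rw [← heq]; simp
      rw [LinearMap.range_eq_bot] at this
      have h10 : (1 : A ⧸ maximalIdeal A) = 0 := hf (by simp [this])
      have hnt : Nontrivial (A ⧸ maximalIdeal A) := Ideal.Quotient.nontrivial_iff.2
        (maximalIdeal.isMaximal A).ne_top
      exact one_ne_zero h10
    have hL' : fazPD A (N ⧸ L') g := by
      by_contra hc
      exact hLmax L' hc hlt
    refine hL'.congr ?_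
    refine LinearEquiv.ofBijective (Submodule.mapQ _ _ L.mkQ le_rfl) ⟨?_, ?_⟩
    · rw [← LinearMap.ker_eq_bot, Submodule.ker_mapQ]
      simp
    · rw [← LinearMap.range_eq_top, Submodule.range_mapQ]
      simp
  obtain ⟨rs, hl, hm, hw, hz⟩ := faz_maxreg d hd
  obtain ⟨f', hf'⟩ := faz_depth0 (A ⧸ Ideal.ofList rs • (⊤ : Submodule A A)) hz
  have hB : ¬ fazPD A (A ⧸ Ideal.ofList rs • (⊤ : Submodule A A)) g := fun hB =>
    hk (fazPD.left f' hf' hB (hg _ inferInstance))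
  have e := ModuleCat.projectiveDimension_quotient_eq_add_length_of_isWeaklyRegular
    (ModuleCat.of A A) rs hw hm
  have e0 : projectiveDimension (ModuleCat.of A A) = 0 :=
    ModuleCat.projectiveDimension_eq_zero_of_projective _
  rw [e0, zero_add] at e
  have h5 := (projectiveDimension_ge_iff (ModuleCat.of A _) g).2 hB
  have h6 : g ≤ rs.length := by
    have := h5.trans_eq e
    exact_mod_cast this
  intro N _ _ hN
  exact (hg N hN).mono (by omega)

lemma faz_proj (d : ℕ) (hd : ringKrullDim A = d)
    (h : ∃ n : ℕ, ∀ (N : Type u) [AddCommGroup N] [Module A N], Module.Finite A N → fazPD A N n)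
    (M : Type u) [AddCommGroup M] [Module A M] [Module.Finite A M] [Nontrivial M]
    (rs : List A) (hl : rs.length = d) (hm : ∀ x ∈ rs, x ∈ maximalIdeal A)
    (hw : IsWeaklyRegular M rs) : Module.Projective A M := by
  have e := ModuleCat.projectiveDimension_quotient_eq_add_length_of_isWeaklyRegular
    (ModuleCat.of A M) rs hw hm
  have h1 : projectiveDimension (ModuleCat.of A (M ⧸ Ideal.ofList rs • (⊤ : Submodule A M))) ≤ d :=
    (projectiveDimension_le_iff _ _).2 (faz_bound d hd h _ inferInstance)
  have h2 : projectiveDimension (ModuleCat.of A M) + (d : ℕ) ≤ ((0 : ℕ) : WithBot ℕ∞) + (d : ℕ) := by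
    rw [hl] at e
    erw [← e]
    simpa using h1
  rw [ENat.WithBot.add_le_add_natCast_right_iff, projectiveDimension_le_iff] at h2
  rw [IsProjective.iff_projective]
  exact (projective_iff_hasProjectiveDimensionLE_zero _).2 h2
end
section
open CategoryTheory TensorProduct
lemma faz_gl_iff (S : Type u) [Ring S] : HasFiniteGlobalDimension S ↔
    ∃ n : ℕ, ∀ (M : Type u) [AddCommGroup M] [Module S M], fazPD S M n := by
  constructor
  · rintro ⟨n, h⟩
    refine ⟨n + 1, fun M _ _ => ?_⟩
    letI : HasDerivedCategory (ModuleCat S) := HasDerivedCategory.standard _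
    letI : HasExt (ModuleCat S) := hasExt_of_hasDerivedCategory _
    rw [fazPD, hasProjectiveDimensionLT_iff]
    intro i hi Y e
    have := h M Y i (by omega)
    exact @Subsingleton.elim _ this _ _
  · rintro ⟨n, h⟩
    refine ⟨n, fun M N _ _ _ _ i hi => ?_⟩
    unfold ExtGroup
    letI : HasDerivedCategory (ModuleCat S) := HasDerivedCategory.standard _
    letI : HasExt (ModuleCat S) := hasExt_of_hasDerivedCategory _
    have := h M
    exact HasProjectiveDimensionLT.subsingleton (ModuleCat.of S M) n i hi.le _

lemma faz_basechange_proj {Z R A : Type u} [CommRing Z] [Ring R] [Algebra Z R] [CommRing A]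
    [Algebra Z A] [Module.Projective A (A ⊗[Z] R)]
    (X : Type u) [AddCommGroup X] [Module R X] [Module Z X] [IsScalarTower Z R X]
    [Module.Projective R X] : Module.Projective A (A ⊗[Z] X) := by
  classical
  obtain ⟨s, hs⟩ := Module.projective_def'.1 (inferInstance : Module.Projective R X)
  have : Module.Projective A (X →₀ A ⊗[Z] R) :=
    Module.Projective.of_equiv (finsuppLEquivDirectSum A (A ⊗[Z] R) X).symm
  have hfree : Module.Projective A (A ⊗[Z] (X →₀ R)) :=
    Module.Projective.of_equiv (TensorProduct.finsuppRight Z A A R X).symm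
  refine Module.Projective.of_split (LinearMap.baseChange A (s.restrictScalars Z))
    (LinearMap.baseChange A ((Finsupp.linearCombination R id).restrictScalars Z)) ?_
  rw [← LinearMap.baseChange_comp, ← LinearMap.restrictScalars_comp, hs]
  ext; simp

lemma faz_bc_exact {Z A K P X : Type u} [CommRing Z] [CommRing A] [Algebra Z A] [Module.Flat Z A]
    [AddCommGroup K] [AddCommGroup P] [AddCommGroup X] [Module Z K] [Module Z P] [Module Z X]
    (i : K →ₗ[Z] P) (g : P →ₗ[Z] X) (hi : Function.Injective i) (he : Function.Exact i g)
    (hg : Function.Surjective g) :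
    Function.Injective (i.baseChange A) ∧ Function.Exact (i.baseChange A) (g.baseChange A) ∧
      Function.Surjective (g.baseChange A) :=
  ⟨Module.Flat.lTensor_preserves_injective_linearMap (M := A) i hi,
   lTensor_exact A he hg, LinearMap.lTensor_surjective A hg⟩

lemma faz_bc_step {Z A K P X : Type u} [CommRing Z] [CommRing A] [Algebra Z A] [Module.Flat Z A]
    [AddCommGroup K] [AddCommGroup P] [AddCommGroup X] [Module Z K] [Module Z P] [Module Z X]
    (i : K →ₗ[Z] P) (g : P →ₗ[Z] X) (hi : Function.Injective i) (he : Function.Exact i g)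
    (hg : Function.Surjective g) [Module.Projective A (A ⊗[Z] P)] (n : ℕ)
    (h2 : fazPD A (A ⊗[Z] K) (n + 1)) : fazPD A (A ⊗[Z] X) (n + 1 + 1) := by
  obtain ⟨hi, hex, hg⟩ := faz_bc_exact (A := A) i g hi he hg
  have hS' := LinearMap.shortExact_shortComplexKer hg
  have hP' : Projective (ModuleCat.of A (A ⊗[Z] P)) :=
    (IsProjective.iff_projective (R := A) _).1 inferInstance
  refine (hS'.hasProjectiveDimensionLT_X₃_iff n hP').2 ?_
  exact h2.congr ((LinearEquiv.ofInjective _ hi).trans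
      (LinearEquiv.ofEq _ _ (LinearMap.exact_iff.1 hex).symm))

lemma faz_basechange_pd {Z R A : Type u} [CommRing Z] [Ring R] [Algebra Z R] [CommRing A]
    [Algebra Z A] [Module.Flat Z A] [Module.Projective A (A ⊗[Z] R)] (n : ℕ) :
    ∀ (X : Type u) [AddCommGroup X] [Module R X] [Module Z X] [IsScalarTower Z R X],
      fazPD R X (n + 1) → fazPD A (A ⊗[Z] X) (n + 1) := by
  induction n with
  | zero =>
    intro X _ _ _ _ h
    have : Projective (ModuleCat.of R X) := projective_iff_hasProjectiveDimensionLT_one.2 h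
    have := (IsProjective.iff_projective (R := R) X).2 this
    have := faz_basechange_proj (Z := Z) (R := R) (A := A) X
    exact projective_iff_hasProjectiveDimensionLT_one.1
      ((IsProjective.iff_projective (R := A) _).1 this)
  | succ n ih =>
    intro X _ _ _ _ h
    let f : (X →₀ R) →ₗ[R] X := Finsupp.linearCombination R id
    have hf : Function.Surjective f := Finsupp.linearCombination_id_surjective R X
    have hS := LinearMap.shortExact_shortComplexKer hf
    have hP : Projective (ModuleCat.of R (X →₀ R)) :=
      (IsProjective.iff_projective (R := R) _).1 inferInstance
    have h1 : fazPD R (LinearMap.ker f) (n + 1) :=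
      (hS.hasProjectiveDimensionLT_X₃_iff n hP).1 h
    have h2 := ih _ h1
    have := faz_basechange_proj (Z := Z) (R := R) (A := A) (X →₀ R)
    refine faz_bc_step (A := A) (K := LinearMap.ker f)
      ((LinearMap.ker f).subtype.restrictScalars Z) (f.restrictScalars Z) ?_ ?_ hf n h2
    · exact Subtype.val_injective
    · exact LinearMap.exact_subtype_ker_map f

lemma faz_forward {Z R A : Type u} [CommRing Z] [Ring R] [Algebra Z R] [CommRing A]
    [Algebra Z A] (S : Submonoid Z) [IsLocalization S A] [IsLocalRing A]
    [Module.Projective A (A ⊗[Z] R)] [Module.Finite A (A ⊗[Z] R)] [FaithfulSMul A (A ⊗[Z] R)]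
    (h : HasFiniteGlobalDimension R) : HasFiniteGlobalDimension A := by
  have hflat : Module.Flat Z A := IsLocalization.flat A S
  have hfree : Module.Free A (A ⊗[Z] R) := Module.free_of_flat_of_isLocalRing
  have hnt : Nontrivial (A ⊗[Z] R) := by
    by_contra hc
    rw [not_nontrivial_iff_subsingleton] at hc
    have : (1 : A) = 0 := FaithfulSMul.eq_of_smul_eq_smul (α := A ⊗[Z] R)
      (fun a => Subsingleton.elim _ _)
    exact one_ne_zero this
  -- ρ and x
  obtain ⟨ρ, x, hx⟩ : ∃ (ρ : R →ₗ[Z] A) (x : R), ρ x = 1 := by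
    let b := Module.Free.chooseBasis A (A ⊗[Z] R)
    obtain ⟨i⟩ := b.index_nonempty
    have hloc := IsLocalizedModule.surj S (TensorProduct.mk Z A R 1)
    obtain ⟨⟨x, s⟩, hxs⟩ := hloc (b i)
    let c := b.coord i
    obtain ⟨t, ht⟩ := IsLocalization.map_units A s
    refine ⟨(((t⁻¹ : Aˣ) : A) • c).restrictScalars Z ∘ₗ TensorProduct.mk Z A R 1, x, ?_⟩
    simp only at hxs
    simp only [LinearMap.comp_apply, LinearMap.restrictScalars_apply, ← hxs]
    rw [LinearMap.smul_apply, Submonoid.smul_def, ← algebraMap_smul A (s : Z) (b i), map_smul, ← ht]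
    simp [c]
  rw [faz_gl_iff] at h ⊢
  obtain ⟨n, h⟩ := h
  refine ⟨n + 1, fun M _ _ => ?_⟩
  letI : Module Z M := Module.compHom M (algebraMap Z A)
  haveI : IsScalarTower Z A M := ⟨fun z a m => by
    rw [Algebra.smul_def, mul_smul]; rfl⟩
  have h1 : fazPD R (R ⊗[Z] M) (n + 1) := (h _).mono (by omega)
  have h2 : fazPD A (A ⊗[Z] (R ⊗[Z] M)) (n + 1) := faz_basechange_pd (Z := Z) n _ h1
  have h3 : fazPD A (A ⊗[Z] (M ⊗[Z] R)) (n + 1) :=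
    h2.congr (LinearEquiv.baseChange Z A _ _ (TensorProduct.comm Z R M))
  have h4 : fazPD A (M ⊗[Z] R) (n + 1) := h3.congr (IsLocalization.moduleLid S A _)
  let i : M →ₗ[A] M ⊗[Z] R :=
    { toFun := fun m => m ⊗ₜ x
      map_add' := fun a b => by rw [TensorProduct.add_tmul]
      map_smul' := fun a b => by simp [TensorProduct.smul_tmul'] }
  let r : M ⊗[Z] R →ₗ[A] M := TensorProduct.AlgebraTensorModule.lift
    { toFun := fun m => (LinearMap.toSpanSingleton A M m).restrictScalars Z ∘ₗ ρ
      map_add' := fun a b => by ext; simp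
      map_smul' := fun a b => by
        ext y; change ρ y • a • b = a • ρ y • b; exact smul_comm _ _ _ }
  have hri : r ∘ₗ i = LinearMap.id := by
    ext m; change ρ x • m = m; rw [hx, one_smul]
  refine Retract.hasProjectiveDimensionLT (Y := ModuleCat.of A (M ⊗[Z] R)) ⟨ModuleCat.ofHom i, ModuleCat.ofHom r, ?_⟩ (n+1)
  rw [← ModuleCat.ofHom_comp, hri]; rfl
end
section
open TensorProduct
lemma faz_height {C : Type*} [CommRing C] (p : Ideal C) [hp : p.IsPrime] :
    cHeight p = p.height := by
  have h := PrimeSpectrum.height_eq_orderHeight (⟨p, hp⟩ : PrimeSpectrum C)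
  change p.height = _ at h
  rw [h]
  apply le_antisymm
  · refine sSup_le ?_
    rintro _ ⟨m, rfl, f, hf, hpr, hl⟩
    let s : LTSeries (PrimeSpectrum C) :=
      { length := m
        toFun := fun i => ⟨f i, hpr i⟩
        step := fun i => hf (Fin.castSucc_lt_succ) }
    refine Order.length_le_height (p := s) ?_
    exact le_of_eq (PrimeSpectrum.ext hl)
  · refine Order.height_le fun s hs => ?_
    refine le_sSup ⟨s.length, rfl, fun i => (s i).asIdeal, ?_, fun i => (s i).isPrime, ?_⟩
    · intro i j hij
      exact s.strictMono hij
    · exact congrArg PrimeSpectrum.asIdeal hs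

lemma faz_grade {C : Type*} [CommRing C] (I : Ideal C) (M : Type*) [AddCommGroup M] [Module C M]
    (d : ℕ) (h : cGrade I M = d) : ∃ rs : List C, rs.length = d ∧ (∀ x ∈ rs, x ∈ I) ∧
      RingTheory.Sequence.IsWeaklyRegular M rs := by
  rcases Nat.eq_zero_or_pos d with rfl | hd
  · exact ⟨[], rfl, by simp, by simp⟩
  · unfold cGrade at h
    have hlt : ((d - 1 : ℕ) : ℕ∞) < d := by exact_mod_cast (by omega)
    rw [← h] at hlt
    obtain ⟨_, ⟨rs, rfl, h1, h2⟩, h3⟩ := lt_sSup_iff.1 hlt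
    have h4 : (rs.length : ℕ∞) ≤ d := h ▸ le_sSup ⟨rs, rfl, h1, h2⟩
    norm_cast at h3 h4
    exact ⟨rs, by omega, h1, h2.toIsWeaklyRegular⟩

lemma faz_projloc {Z R : Type u} [CommRing Z] [Ring R] [Algebra Z R] [IsNoetherianRing Z]
    [Module.Finite Z R] (m : Ideal Z) [m.IsMaximal] (hCM : IsMaximalCohenMacaulay Z R)
    [Nontrivial (Localization.AtPrime m ⊗[Z] R)]
    (hg : HasFiniteGlobalDimension (Localization.AtPrime m)) :
    Module.Projective (Localization.AtPrime m) (Localization.AtPrime m ⊗[Z] R) := by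
  have hn : IsNoetherianRing (Localization.AtPrime m) :=
    IsLocalization.isNoetherianRing m.primeCompl _ inferInstance
  obtain ⟨d, hd⟩ := ENat.ne_top_iff_exists.1 (Ideal.height_ne_top_of_isPrime (I := m))
  obtain ⟨rs, hl, hm, hw⟩ := faz_grade m R d (by rw [hCM m inferInstance, faz_height, ← hd])
  have hw' := hw.of_isLocalizedModule (Localization.AtPrime m) m.primeCompl
    (TensorProduct.mk Z (Localization.AtPrime m) R 1)
  obtain ⟨n, hn⟩ := (faz_gl_iff _).1 hg
  refine faz_proj d ?_ ⟨n, fun N _ _ _ => hn N⟩ _ (rs.map (algebraMap Z _)) (by simpa) ?_ hw'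
  · rw [IsLocalization.AtPrime.ringKrullDim_eq_height m, ← hd]; rfl
  · intro x hx
    obtain ⟨r, hr, rfl⟩ := List.mem_map.1 hx
    exact (IsLocalization.AtPrime.to_map_mem_maximal_iff _ m _).2 (hm r hr)
end
section
open TensorProduct
lemma faz_azu_apply {C R : Type*} [CommRing C] [Ring R] [Algebra C R] (a : R) (b : Rᵐᵒᵖ) (x : R) :
    azuMap C R (a ⊗ₜ b) x = a * (x * b.unop) := rfl

lemma faz_clear {Z R A : Type u} [CommRing Z] [Ring R] [Algebra Z R] [CommRing A]
    [Algebra Z A] (S : Submonoid Z) [IsLocalization S A]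
    (T : (A ⊗[Z] R) ⊗[A] (A ⊗[Z] R)ᵐᵒᵖ) :
    ∃ s ∈ S, ∃ t : R ⊗[Z] Rᵐᵒᵖ, ∀ x : R,
      s • (azuMap A (A ⊗[Z] R) T ((1 : A) ⊗ₜ[Z] x)) = (1 : A) ⊗ₜ[Z] (azuMap Z R t x) := by
  induction T with
  | zero => exact ⟨1, S.one_mem, 0, fun x => by simp⟩
  | tmul a b =>
    have hloc := IsLocalizedModule.surj S (TensorProduct.mk Z A R 1)
    obtain ⟨⟨a', s1⟩, h1⟩ := hloc a
    obtain ⟨⟨b', s2⟩, h2⟩ := hloc b.unop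
    refine ⟨s1 * s2, (s1 * s2).2, a' ⊗ₜ MulOpposite.op b', fun x => ?_⟩
    rw [faz_azu_apply, faz_azu_apply]
    simp only [TensorProduct.mk_apply, Submonoid.smul_def] at h1 h2
    rw [mul_smul]
    calc _ = ((s1 : Z) • a) * (((1 : A) ⊗ₜ[Z] x) * ((s2 : Z) • b.unop)) := by
          rw [smul_mul_assoc, mul_smul_comm, mul_smul_comm]
      _ = _ := by
          rw [h1, h2]; simp
  | add T1 T2 h1 h2 =>
    obtain ⟨s1, m1, t1, h1⟩ := h1
    obtain ⟨s2, m2, t2, h2⟩ := h2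
    refine ⟨s1 * s2, S.mul_mem m1 m2, s2 • t1 + s1 • t2, fun x => ?_⟩
    simp only [map_add, LinearMap.add_apply, smul_add, map_smul, LinearMap.smul_apply,
      TensorProduct.tmul_add, TensorProduct.tmul_smul, ← h1, ← h2]
    rw [mul_smul, mul_smul, smul_comm s1 s2]

lemma faz_sur_of_azu {Z R A : Type u} [CommRing Z] [Ring R] [Algebra Z R] [CommRing A]
    [Algebra Z A] (S : Submonoid Z) [IsLocalization S A]
    (hinj : Function.Injective (TensorProduct.mk Z A R 1))
    (hs : Function.Surjective (azuMap A (A ⊗[Z] R))) (φ : R →ₗ[Z] R) :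
    ∃ s ∈ S, ∃ t : R ⊗[Z] Rᵐᵒᵖ, azuMap Z R t = s • φ := by
  obtain ⟨T, hT⟩ := hs (φ.baseChange A)
  obtain ⟨s, hsS, t, h⟩ := faz_clear S T
  refine ⟨s, hsS, t, ?_⟩
  ext x
  apply hinj
  change (1 : A) ⊗ₜ[Z] _ = (1 : A) ⊗ₜ[Z] _
  rw [← h, hT]
  simp

lemma faz_lift {Z R A : Type u} [CommRing Z] [Ring R] [Algebra Z R] [CommRing A]
    [Algebra Z A] (t : R ⊗[Z] Rᵐᵒᵖ) :
    ∃ T : (A ⊗[Z] R) ⊗[A] (A ⊗[Z] R)ᵐᵒᵖ, ∀ x : R,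
      azuMap A (A ⊗[Z] R) T ((1 : A) ⊗ₜ[Z] x) = (1 : A) ⊗ₜ[Z] (azuMap Z R t x) := by
  induction t with
  | zero => exact ⟨0, fun x => by simp⟩
  | tmul a b =>
    refine ⟨((1 : A) ⊗ₜ a) ⊗ₜ MulOpposite.op ((1 : A) ⊗ₜ b.unop), fun x => ?_⟩
    rw [faz_azu_apply, faz_azu_apply]; simp
  | add T1 T2 h1 h2 =>
    obtain ⟨t1, h1⟩ := h1
    obtain ⟨t2, h2⟩ := h2
    refine ⟨t1 + t2, fun x => ?_⟩
    simp only [map_add, LinearMap.add_apply, TensorProduct.tmul_add, ← h1, ← h2]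

lemma faz_local_sur {Z R A : Type u} [CommRing Z] [Ring R] [Algebra Z R] [CommRing A]
    [Algebra Z A] (S : Submonoid Z) [IsLocalization S A] [Module.FinitePresentation Z R]
    (q : Ideal A) [hq : q.IsPrime]
    (h : ∀ φ : R →ₗ[Z] R, ∃ s ∉ q.comap (algebraMap Z A), ∃ t : R ⊗[Z] Rᵐᵒᵖ,
      azuMap Z R t = s • φ) (ψ : (A ⊗[Z] R) →ₗ[A] (A ⊗[Z] R)) :
    ∃ s ∉ q, ∃ T, azuMap A (A ⊗[Z] R) T = s • ψ := by
  obtain ⟨φ, s, hφ⟩ := Module.FinitePresentation.exists_lift_of_isLocalizedModule S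
    (TensorProduct.mk Z A R 1) (ψ.restrictScalars Z ∘ₗ TensorProduct.mk Z A R 1)
  obtain ⟨s', hs', t, ht⟩ := h φ
  obtain ⟨T, hT⟩ := faz_lift (A := A) t
  refine ⟨algebraMap Z A s' * algebraMap Z A s, ?_, T, ?_⟩
  · intro hc
    rcases hq.mem_or_mem hc with hc | hc
    · exact hs' hc
    · exact hq.ne_top (Ideal.eq_top_of_isUnit_mem _ hc (IsLocalization.map_units A s))
  · apply TensorProduct.AlgebraTensorModule.ext
    intro a x
    have hφx : (1 : A) ⊗ₜ[Z] φ x = (s : Z) • ψ ((1 : A) ⊗ₜ[Z] x) := LinearMap.congr_fun hφ x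
    have : a ⊗ₜ[Z] x = a • ((1 : A) ⊗ₜ[Z] x) := by simp [TensorProduct.smul_tmul']
    rw [this, map_smul, map_smul, hT, ht, LinearMap.smul_apply, TensorProduct.tmul_smul, hφx,
      LinearMap.smul_apply, mul_smul, algebraMap_smul, algebraMap_smul]

lemma faz_det {A E F : Type*} [CommRing A] [AddCommGroup E] [Module A E]
    [AddCommGroup F] [Module A F] [Module.Free A F] [Module.Finite A F]
    (e : F ≃ₗ[A] E) (f : E →ₗ[A] F) (q : Ideal A) [hq : q.IsPrime]
    (h : ∀ ψ : F, ∃ s ∉ q, ∃ x, f x = s • ψ) : LinearMap.det (e.toLinearMap ∘ₗ f) ∉ q := by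
  classical
  have : Module.Free A E := Module.Free.of_equiv e
  let b := Module.Free.chooseBasis A F
  choose s hs x hx using fun i => h (b i)
  have hS : ∏ i, s i ∉ q := by
    intro hc
    obtain ⟨i, -, hi⟩ := (Ideal.IsPrime.prod_mem_iff (p := q)).1 hc
    exact hs i hi
  choose c hc using fun i => Finset.dvd_prod_of_mem s (Finset.mem_univ i)
  let g : F →ₗ[A] E := b.constr A (fun i => c i • x i)
  have hg : f ∘ₗ g = (∏ i, s i) • LinearMap.id := by
    apply b.ext
    intro i
    simp only [LinearMap.comp_apply, g, b.constr_basis, map_smul, hx, LinearMap.smul_apply,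
      LinearMap.id_apply, smul_smul]
    rw [hc i, mul_comm]
  have hd : (e.toLinearMap ∘ₗ f) ∘ₗ (g ∘ₗ e.symm.toLinearMap) = (∏ i, s i) • LinearMap.id := by
    ext y
    have := LinearMap.congr_fun hg (e.symm y)
    simp only [LinearMap.comp_apply] at this
    simp [this]
  intro hmem
  have h2 := congrArg LinearMap.det hd
  rw [LinearMap.det_comp, LinearMap.det_smul, LinearMap.det_id, mul_one] at h2
  exact hS (hq.mem_of_pow_mem _ (h2 ▸ q.mul_mem_right _ hmem))

lemma faz_bij {A E F : Type*} [CommRing A] [IsDomain A] [IsNoetherianRing A] [IsLocalRing A]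
    [AddCommGroup E] [Module A E]
    [AddCommGroup F] [Module A F] [Module.Free A F] [Module.Finite A F]
    (e : F ≃ₗ[A] E) (f : E →ₗ[A] F)
    (h : ∀ q : Ideal A, q.IsPrime → (q.height = 1 ∨ (q = ⊥ ∧ IsLocalRing.maximalIdeal A = ⊥)) →
      ∀ ψ : F, ∃ s ∉ q, ∃ x, f x = s • ψ) : Function.Bijective f := by
  have : Module.Free A E := Module.Free.of_equiv e
  have : Module.Finite A E := Module.Finite.equiv e
  have key : IsUnit (LinearMap.det (e.toLinearMap ∘ₗ f)) := by
    by_contra hu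
    set δ := LinearMap.det (e.toLinearMap ∘ₗ f)
    by_cases hm : IsLocalRing.maximalIdeal A = ⊥
    · refine faz_det e f ⊥ (h ⊥ Ideal.isPrime_bot (Or.inr ⟨rfl, hm⟩)) ?_
      rw [← hm]; exact hu
    obtain ⟨y, hy0, hym, hyδ⟩ : ∃ y : A, y ≠ 0 ∧ y ∈ IsLocalRing.maximalIdeal A ∧
        y ∣ δ := by
      by_cases h0 : δ = 0
      · obtain ⟨y, h1, h2⟩ := Submodule.exists_mem_ne_zero_of_ne_bot hm
        exact ⟨y, h2, h1, h0 ▸ dvd_zero y⟩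
      · exact ⟨δ, h0, hu, dvd_rfl⟩
    obtain ⟨q, hq, -⟩ := Ideal.exists_minimalPrimes_le
      (I := Ideal.span {y}) (J := IsLocalRing.maximalIdeal A)
      ((Ideal.span_singleton_le_iff_mem _).2 hym)
    have hqp := hq.1.1
    have hyq : y ∈ q := hq.1.2 (Ideal.mem_span_singleton_self y)
    have hle := Ideal.height_le_one_of_isPrincipal_of_mem_minimalPrimes _ q hq
    have hne : q.height ≠ 0 := by
      rw [Ne, Ideal.height_eq_zero_iff_eq_bot]
      rintro rfl
      exact hy0 (by simpa using hyq)
    have h1 : q.height = 1 := le_antisymm hle (Order.one_le_iff_ne_zero.2 hne)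
    exact faz_det e f q (h q hqp (Or.inl h1)) (q.mem_of_dvd hyδ hyq)
  have hb : Function.Bijective (e.toLinearMap ∘ₗ f) := by
    rw [← Module.End.isUnit_iff]
    exact LinearMap.isUnit_iff_isUnit_det _ |>.2 key
  have : (f : E → F) = e.symm ∘ (e.toLinearMap ∘ₗ f) := by ext; simp
  rw [this]
  exact e.symm.bijective.comp hb
end
section
open TensorProduct
lemma faz_nilp {R : Type*} [Ring R] [Nontrivial R]
    (hprime : ∀ a b : R, (∀ r : R, a * r * b = 0) → a = 0 ∨ b = 0)
    (I : Ideal R) [I.IsTwoSided] (h : IsNilpotent I) : I = ⊥ := by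
  by_contra hI
  obtain ⟨a, haI, ha⟩ := Submodule.exists_mem_ne_zero_of_ne_bot hI
  obtain ⟨n, hn⟩ := h
  induction n with
  | zero =>
    rw [Submodule.pow_zero, Ideal.one_eq_top] at hn
    have : (1 : R) ∈ (⊤ : Ideal R) := trivial
    rw [hn] at this
    exact one_ne_zero (α := R) (by simpa using this)
  | succ k ih =>
    apply ih
    refine (Submodule.eq_bot_iff _).2 fun b hb => ?_
    refine (hprime a b fun r => ?_).resolve_left ha
    have : a * r * b ∈ I * I ^ k := Ideal.mul_mem_mul (I.mul_mem_right r haI) hb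
    rw [← Ideal.IsTwoSided.pow_succ, hn] at this
    simpa using this

lemma faz_simple {R : Type*} [Ring R] [Nontrivial R] [IsArtinianRing R]
    (hprime : ∀ a b : R, (∀ r : R, a * r * b = 0) → a = 0 ∨ b = 0)
    (I : Ideal R) [I.IsTwoSided] (h : I ≠ ⊥) : I = ⊤ := by
  have hss : IsSemisimpleRing R := by
    rw [IsArtinianRing.isSemisimpleRing_iff_jacobson]
    apply faz_nilp hprime
    rw [← Ideal.jacobson_bot]
    exact IsArtinianRing.isNilpotent_jacobson_bot
  obtain ⟨a, haI, ha⟩ := Submodule.exists_mem_ne_zero_of_ne_bot h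
  rw [eq_top_iff, ← IsSemisimpleModule.sSup_simples_eq_top R R]
  refine sSup_le fun L hL => ?_
  have hL : IsSimpleModule R L := hL
  have hat : IsAtom L := (isSimpleModule_iff_isAtom).1 hL
  obtain ⟨b, hbL, hb⟩ := Submodule.exists_mem_ne_zero_of_ne_bot hat.1
  have : ¬ ∀ r, a * r * b = 0 := fun hc => by
    rcases hprime a b hc with h | h
    · exact ha h
    · exact hb h
  push Not at this
  obtain ⟨r, hr⟩ := this
  have h1 : a * r * b ∈ L ⊓ I :=
    ⟨L.smul_mem (a * r) hbL, I.mul_mem_right b (I.mul_mem_right r haI)⟩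
  rcases hat.le_iff.1 (inf_le_left : L ⊓ I ≤ L) with h2 | h2
  · rw [h2] at h1; exact absurd (by simpa using h1) hr
  · rw [← h2]; exact inf_le_right

lemma faz_csa {Z R : Type u} [CommRing Z] [Ring R] [Algebra Z R] [Nontrivial R]
    [IsArtinianRing Z] [Module.Finite Z R]
    (hc : ∀ x : R, x ∈ Subring.center R → ∃ z : Z, algebraMap Z R z = x)
    (hprime : ∀ a b : R, (∀ r : R, a * r * b = 0) → a = 0 ∨ b = 0)
    (φ : R →ₗ[Z] R) : ∃ t : R ⊗[Z] Rᵐᵒᵖ, azuMap Z R t = φ := by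
  have hart : IsArtinianRing R := IsArtinianRing.of_finite Z R
  let M : Module (R ⊗[Z] Rᵐᵒᵖ) R := TensorProduct.Algebra.module
  have hsm : ∀ (a : R) (b : Rᵐᵒᵖ) (x : R), (a ⊗ₜ[Z] b : R ⊗[Z] Rᵐᵒᵖ) • x = a * (x * b.unop) :=
    fun a b x => rfl
  have hsmul : ∀ (t : R ⊗[Z] Rᵐᵒᵖ) (x : R), t • x = azuMap Z R t x := by
    intro t x
    induction t with
    | zero => exact (zero_smul (R ⊗[Z] Rᵐᵒᵖ) x).trans (by simp)
    | tmul a b => rfl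
    | add t1 t2 h1 h2 => rw [add_smul, h1, h2, map_add, LinearMap.add_apply]
  have hsimp : IsSimpleModule (R ⊗[Z] Rᵐᵒᵖ) R := by
    rw [isSimpleModule_iff]
    refine ⟨fun N => ?_⟩
    let I : Ideal R :=
      { carrier := N
        add_mem' := N.add_mem
        zero_mem' := N.zero_mem
        smul_mem' := fun r x hx => by
          have := N.smul_mem (r ⊗ₜ[Z] (1 : Rᵐᵒᵖ)) hx
          rw [hsm] at this
          simpa using this }
    have : I.IsTwoSided := ⟨fun {x} r hx => by
      have := N.smul_mem ((1 : R) ⊗ₜ[Z] (MulOpposite.op r)) hx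
      rw [hsm] at this
      rw [one_mul] at this
      exact this⟩
    by_cases hI : I = ⊥
    · left
      refine (Submodule.eq_bot_iff _).2 fun x hx => ?_
      have : x ∈ I := hx
      rw [hI] at this; simpa using this
    · right
      have := faz_simple hprime I hI
      refine (Submodule.eq_top_iff').2 fun x => ?_
      have hx : x ∈ I := this ▸ trivial
      exact hx
  have hcomm : ∀ (g : Module.End (R ⊗[Z] Rᵐᵒᵖ) R) (x : R), φ (g x) = g (φ x) := by
    intro g
    have hl : ∀ x, g x = x * g 1 := fun x => by
      have := g.map_smul (x ⊗ₜ[Z] (1 : Rᵐᵒᵖ)) 1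
      rw [hsm, hsm] at this
      simpa using this
    have hr : ∀ x, g x = g 1 * x := fun x => by
      have := g.map_smul ((1 : R) ⊗ₜ[Z] (MulOpposite.op x)) 1
      rw [hsm, hsm] at this
      simpa using this
    obtain ⟨z, hz⟩ := hc (g 1) (Subring.mem_center_iff.2 fun y => by rw [← hl, ← hr])
    intro x
    rw [hr, hr (φ x), ← hz, ← Algebra.smul_def, ← Algebra.smul_def, map_smul]
  let f : Module.End (Module.End (R ⊗[Z] Rᵐᵒᵖ) R) R :=
    { toFun := φ
      map_add' := φ.map_add
      map_smul' := fun g x => hcomm g x }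
  obtain ⟨s, hs⟩ := (Module.Finite.fg_top : (⊤ : Submodule Z R).FG)
  obtain ⟨t, ht⟩ := jacobson_density f s
  refine ⟨t, ?_⟩
  apply LinearMap.ext_on hs
  intro x hx
  rw [← hsmul, ← ht x hx]
  rfl
end
section
open TensorProduct
lemma faz_mk_inj {Z R A : Type u} [CommRing Z] [Ring R] [Algebra Z R] [CommRing A]
    [Algebra Z A] (S : Submonoid Z) [IsLocalization S A]
    (htf : ∀ (z : Z) (x : R), z • x = 0 → z = 0 ∨ x = 0) (h0 : (0 : Z) ∉ S) :
    Function.Injective (TensorProduct.mk Z A R 1) := by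
  intro x y hxy
  obtain ⟨c, hc⟩ := IsLocalizedModule.exists_of_eq (S := S) hxy
  have h1 : (c : Z) • (x - y) = 0 := by
    rw [smul_sub, sub_eq_zero]; exact hc
  rcases htf _ _ h1 with h | h
  · exact absurd (h ▸ c.2) h0
  · exact sub_eq_zero.1 h

lemma faz_bij_azu {A B : Type u} [CommRing A] [IsDomain A] [IsNoetherianRing A] [IsLocalRing A]
    [Ring B] [Algebra A B] [Module.Free A B] [Module.Finite A B]
    (h : ∀ q : Ideal A, q.IsPrime → (q.height = 1 ∨ (q = ⊥ ∧ IsLocalRing.maximalIdeal A = ⊥)) →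
      ∀ ψ : B →ₗ[A] B, ∃ s ∉ q, ∃ x, azuMap A B x = s • ψ) :
    Function.Bijective (azuMap A B) := by
  have hfreeop : Module.Free A Bᵐᵒᵖ :=
    Module.Free.of_equiv (MulOpposite.opLinearEquiv A (M := B))
  have hfinop : Module.Finite A Bᵐᵒᵖ :=
    Module.Finite.equiv (MulOpposite.opLinearEquiv A (M := B))
  have hrk : Module.finrank A (B →ₗ[A] B) = Module.finrank A (B ⊗[A] Bᵐᵒᵖ) := by
    rw [Module.finrank_linearMap, Module.finrank_tensorProduct,
      (MulOpposite.opLinearEquiv A (M := B)).finrank_eq]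
  exact faz_bij (F := B →ₗ[A] B) (LinearEquiv.ofFinrankEq _ _ hrk) (azuMap A B) h

lemma faz_back {Z R : Type u} [CommRing Z] [IsDomain Z] [Ring R] [Algebra Z R] [Nontrivial R]
    [IsNoetherianRing Z] [Module.Finite Z R]
    (htf : ∀ (z : Z) (x : R), z • x = 0 → z = 0 ∨ x = 0)
    (hc : ∀ x : R, x ∈ Subring.center R → ∃ z : Z, algebraMap Z R z = x)
    (hprime : ∀ a b : R, (∀ r : R, a * r * b = 0) → a = 0 ∨ b = 0)
    (hCM : IsMaximalCohenMacaulay Z R)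
    (hAz1 : ∀ (p : Ideal Z) (hp : p.IsPrime), cHeight p = 1 →
      IsAzumayaAlg (Localization.AtPrime p) (Localization.AtPrime p ⊗[Z] R))
    (m : Ideal Z) [hm : m.IsMaximal] (hg : HasFiniteGlobalDimension (Localization.AtPrime m)) :
    IsAzumayaAlg (Localization.AtPrime m) (Localization.AtPrime m ⊗[Z] R) := by
  let A := Localization.AtPrime m
  have hnA : IsNoetherianRing A :=
    IsLocalization.isNoetherianRing m.primeCompl _ inferInstance
  have hdA : IsDomain A :=
    IsLocalization.isDomain_localization (Ideal.primeCompl_le_nonZeroDivisors m)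
  have hinj := faz_mk_inj (A := A) m.primeCompl htf (fun h => h m.zero_mem)
  have hnt : Nontrivial (A ⊗[Z] R) := hinj.nontrivial
  have hproj : Module.Projective A (A ⊗[Z] R) := faz_projloc m hCM hg
  have hfin : Module.Finite A (A ⊗[Z] R) := inferInstance
  have hfree : Module.Free A (A ⊗[Z] R) := Module.free_of_flat_of_isLocalRing
  have hfp : Module.FinitePresentation Z R := Module.finitePresentation_of_finite Z R
  refine ⟨hfin, hproj, inferInstance, ?_⟩
  apply faz_bij_azu
  intro q hq hor
  refine faz_local_sur m.primeCompl q ?_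
  rcases hor with h1 | ⟨rfl, hmax⟩
  · have hqp : (q.comap (algebraMap Z A)).IsPrime := Ideal.comap_isPrime _ _
    have hht : cHeight (q.comap (algebraMap Z A)) = 1 := by
      rw [faz_height, ← h1]
      exact IsLocalization.height_under m.primeCompl q
    have haz := hAz1 _ hqp hht
    intro φ
    obtain ⟨s, hs, t, ht⟩ := faz_sur_of_azu (q.comap (algebraMap Z A)).primeCompl
      (faz_mk_inj (A := Localization.AtPrime (q.comap (algebraMap Z A)))
        (q.comap (algebraMap Z A)).primeCompl htf (fun h => h (Ideal.zero_mem _)))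
      haz.2.2.2.2 φ
    exact ⟨s, hs, t, ht⟩
  · have hmb : m = ⊥ := by
      refine (Submodule.eq_bot_iff _).2 fun x hx => ?_
      have : algebraMap Z A x ∈ IsLocalRing.maximalIdeal A :=
        (IsLocalization.AtPrime.to_map_mem_maximal_iff A m x).2 hx
      rw [hmax] at this
      exact (IsLocalization.injective A (Ideal.primeCompl_le_nonZeroDivisors m))
        (by simpa using this)
    have hfield : IsField Z := by
      by_contra hnf
      exact Ring.ne_bot_of_isMaximal_of_not_isField hm hnf hmb
    have hart : IsArtinianRing Z := by
      have : IsSimpleOrder (Ideal Z) := by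
        rw [← Ring.isField_iff_isSimpleOrder_ideal]; exact hfield
      have : Finite (Ideal Z) := by
        classical
        exact Set.finite_univ_iff.1 ((Set.toFinite {(⊥ : Ideal Z), ⊤}).subset fun x _ => eq_bot_or_eq_top x)
      exact (Finite.to_wellFoundedLT : WellFoundedLT (Ideal Z))
    intro φ
    obtain ⟨t, ht⟩ := faz_csa hc hprime φ
    exact ⟨1, fun h => hq.ne_top ((Ideal.eq_top_iff_one _).2 (by simp at h)), t, by simpa⟩
end
open TensorProduct in
/-- Let `R` be a prime noetherian ring, finitely generated as a module over its centre
`Z(R)`, with finite global dimension, which is `Z(R)`-Macaulay and Azumaya in height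
one (i.e. `R_p` is Azumaya over `Z(R)_p` for every height-one prime `p` of `Z(R)`).
Then the Azumaya locus of `R` equals the smooth locus of `Z(R)`: for a maximal ideal
`m` of `Z(R)`, `R_m` is Azumaya over `Z(R)_m` iff `Z(R)_m` has finite global
dimension. -/
theorem azumaya_locus_eq_smooth_locus (R : Type u) [Ring R] [IsNoetherianRing R]
    [Module.Finite (Subring.center R) R]
    (hprime : ∀ a b : R, (∀ r : R, a * r * b = 0) → a = 0 ∨ b = 0)
    (hgl : HasFiniteGlobalDimension R)
    (hCM : IsMaximalCohenMacaulay (Subring.center R) R)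
    (hAz1 : ∀ (p : Ideal (Subring.center R)) (hp : p.IsPrime), cHeight p = 1 →
      IsAzumayaAlg (Localization.AtPrime p)
        (Localization.AtPrime p ⊗[Subring.center R] R)) :
    ∀ (m : Ideal (Subring.center R)) (hm : m.IsMaximal),
      haveI : m.IsPrime := hm.isPrime
      (IsAzumayaAlg (Localization.AtPrime m)
          (Localization.AtPrime m ⊗[Subring.center R] R) ↔
        HasFiniteGlobalDimension (Localization.AtPrime m)) := by
  intro m hm
  haveI : m.IsPrime := hm.isPrime
  have hnZ : Nontrivial (Subring.center R) := by
    by_contra hc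
    rw [not_nontrivial_iff_subsingleton] at hc
    exact hm.ne_top (Subsingleton.elim _ _)
  have hnR : Nontrivial R := (Subtype.val_injective (p := (· ∈ Subring.center R))).nontrivial
  have htf : ∀ (z : Subring.center R) (x : R), z • x = 0 → z = 0 ∨ x = 0 := by
    intro z x h
    have h' : (z : R) * x = 0 := h
    have := hprime (z : R) x (fun r => by
      rw [← Subring.mem_center_iff.1 z.2 r, mul_assoc, h', mul_zero])
    exact this.imp (fun h => Subtype.ext h) id
  have hdom : IsDomain (Subring.center R) := by
    have : NoZeroDivisors (Subring.center R) := ⟨fun {a b} hab => by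
      have h1 : a • (b : R) = 0 := congrArg Subtype.val hab
      exact (htf a b h1).imp id (fun h => Subtype.ext h)⟩
    exact NoZeroDivisors.to_isDomain _
  have hfaith : FaithfulSMul (Subring.center R) R := ⟨fun {a b} h => by
    have := h 1
    have h1 : (a : R) * 1 = b * 1 := this
    exact Subtype.ext (by simpa using h1)⟩
  have hnoe : IsNoetherianRing (Subring.center R) := faz_noeth (R := R)
  constructor
  · rintro ⟨h1, h2, h3, -⟩
    exact faz_forward m.primeCompl hgl
  · intro hg
    exact faz_back htf (fun x hx => ⟨⟨x, hx⟩, rfl⟩) hprime hCM hAz1 m hg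
end
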